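/- For every real constant C > 0 there exists a constant D > 0 with the following property: for every integer n ≥ 1, every partition λ of n whose number of rows and number of columns are both at most C·√n, and every permutation π ∈ S_n, one has |χ^λ(π)| ≤ ( D·max(1, |π|²/n) / √n )^{|π|}. -/

import Mathlib

open scoped BigOperators

/-- `|π|`: the minimal number of transpositions whose product is `π`; equivalently
`n` minus the number of orbits of `π`. -/
def permLength {n : ℕ} (π : Equiv.Perm (Fin n)) : ℕ :=
  π.cycleType.sum - π.cycleType.card

/-- The full cycle type of `π ∈ S_n`: the cycle type together with `1`s for fixed points. -/
def fullCycleType {n : ℕ} (π : Equiv.Perm (Fin n)) : Multiset ℕ :=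
  π.cycleType + Multiset.replicate (n - π.cycleType.sum) 1

/-- For a partition `λ` of `n` (given as an antitone `lam : Fin n → ℕ`) and a multiset
`k` of positive integers, the irreducible character value `Tr ρ^λ(k)`, defined via
Frobenius' character formula as the coefficient of `x^(λ+δ)` in
`(∑ᵢ xᵢ^{k₁}) ⋯ (∑ᵢ xᵢ^{k_r}) ⋅ ∑_{w ∈ Sₙ} sgn(w) x^{wδ}`, where `δ = (n-1, …, 1, 0)`. -/
noncomputable def frobChar (n : ℕ) (lam : Fin n → ℕ) (k : Multiset ℕ) : ℤ :=
  MvPolynomial.coeff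
    (Finsupp.equivFunOnFinite.symm fun i : Fin n => lam i + (n - 1 - (i : ℕ)))
    ((Multiset.map (fun m => ∑ i : Fin n, MvPolynomial.X i ^ m) k).prod *
      ∑ w : Equiv.Perm (Fin n),
        MvPolynomial.C ((Equiv.Perm.sign w : ℤ)) *
          ∏ i : Fin n, MvPolynomial.X i ^ (n - 1 - ((w i : ℕ))))

/-- The normalized character `χ^λ(π) = Tr ρ^λ(π) / Tr ρ^λ(e)`. -/
noncomputable def normChar (n : ℕ) (lam : Fin n → ℕ) (π : Equiv.Perm (Fin n)) : ℝ :=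
  (frobChar n lam (fullCycleType π) : ℝ) / (frobChar n lam (Multiset.replicate n 1) : ℝ)

/-!
Induct on `n` through the Jucys–Murphy element `J`, the sum of the transpositions that move a marked
point. Restricted to permutations that fix the marked point, `χ^λ` is the sum of the characters
`χ^(λ - □)` over the removable boxes `□` of `λ`, and `J` acts on the corresponding summand as the
content of `□`, which is at most `C √n` in absolute value. Conversely, the product of `J` and a
permutation that fixes `s` points contains `s` terms in which the marked cycle has swallowed a fixed
point. Solving for them expresses the character through characters with a shorter marked cycle or
with more fixed points, divided by `s`. If `s ≥ n / 2`, a multiplicative bound with weight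
`O((k⁻² + δ) θ ^ (k - 1))` for each cycle of length `k` propagates through this recursion, with `δ`
the maximum of `1 / √n` and (support size) `/ n`, and `θ` a multiple of `δ`. If `s < n / 2`, then
`|π| ≥ n / 4`, and counting the terms of the Murnaghan–Nakayama rule is enough.

All of this happens in the Frobenius formula. Applying `∑ (xᵢ ∂/∂xᵢ)²` to a product of power sums
and the alternant shows that the coefficients of `x^(λ + δ)` are an eigenfunction of multiplication
by the sum of all transpositions; as `J` is a difference of two such sums, this gives its
eigenvalues.
-/

namespace SymmetricCharacter

/-! ### Cut-and-join and Jucys–Murphy operators -/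

section CutJoin

attribute [local instance] LieRing.ofAssociativeRing

variable {A : Type*} [CommRing A]

/-- The sum `∑ t, t * F t (μ ∖ t)` over the parts `t` of `μ`, counted with multiplicity. -/
def partSum : (ℕ → Multiset ℕ → A) →ₗ[A] (Multiset ℕ → A) where
  toFun F μ := (μ.map fun t : ℕ => (t : A) * F t (μ.erase t)).sum
  map_add' F G := by ext μ; simp [mul_add, Multiset.sum_map_add]
  map_smul' c F := by ext μ; simp [mul_left_comm _ c, Multiset.sum_map_mul_left]

lemma partSum_apply (F : ℕ → Multiset ℕ → A) (μ : Multiset ℕ) :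
    partSum F μ = (μ.map fun t : ℕ => (t : A) * F t (μ.erase t)).sum := rfl

@[simp] lemma partSum_zero_right (F : ℕ → Multiset ℕ → A) : partSum F 0 = 0 := by
  simp [partSum_apply]

lemma partSum_congr {F G : ℕ → Multiset ℕ → A} {μ : Multiset ℕ}
    (h : ∀ t ∈ μ, F t (μ.erase t) = G t (μ.erase t)) : partSum F μ = partSum G μ := by
  rw [partSum_apply, partSum_apply]
  exact congrArg _ (Multiset.map_congr rfl fun t ht => by rw [h t ht])

lemma partSum_cons (F : ℕ → Multiset ℕ → A) (t : ℕ) (μ : Multiset ℕ) :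
    partSum F (t ::ₘ μ) = t * F t μ + partSum (fun s ν => F s (t ::ₘ ν)) μ := by
  simp only [partSum_apply, Multiset.map_cons, Multiset.sum_cons, Multiset.erase_cons_head]
  exact congrArg _ (congrArg _ (Multiset.map_congr rfl fun s hs => by
    rw [Multiset.erase_cons_tail_of_mem hs]))

lemma partSum_singleton (F : ℕ → Multiset ℕ → A) (t : ℕ) : partSum F {t} = t * F t 0 := by
  rw [← Multiset.cons_zero, partSum_cons, partSum_zero_right, add_zero]

lemma partSum_add (F G : ℕ → Multiset ℕ → A) (μ : Multiset ℕ) :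
    partSum (fun t ν => F t ν + G t ν) μ = partSum F μ + partSum G μ :=
  congrFun (map_add partSum F G) μ

lemma partSum_const_mul (c : A) (F : ℕ → Multiset ℕ → A) (μ : Multiset ℕ) :
    partSum (fun t ν => c * F t ν) μ = c * partSum F μ :=
  congrFun (map_smul partSum c F) μ

lemma add_sum_erase {μ : Multiset ℕ} {t : ℕ} (ht : t ∈ μ) : t + (μ.erase t).sum = μ.sum := by
  rw [← Multiset.sum_cons, Multiset.cons_erase ht]

lemma partSum_size_mul (c : ℕ → A) (F : ℕ → Multiset ℕ → A) (μ : Multiset ℕ) :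
    partSum (fun t ν => c (t + ν.sum) * F t ν) μ = c μ.sum * partSum F μ := by
  rw [← partSum_const_mul]
  exact partSum_congr fun t ht => by rw [add_sum_erase ht]

lemma map_partSum {B : Type*} [CommRing B] (φ : A →+ B) (F : ℕ → Multiset ℕ → A)
    (μ : Multiset ℕ) : φ (partSum F μ) = partSum (fun t ν => φ (F t ν)) μ := by
  simp only [partSum_apply, map_multiset_sum, Multiset.map_map, Function.comp_def,
    ← nsmul_eq_mul, map_nsmul]

/-- The sum of `G` over the cycle types obtained from cycle type `μ` by multiplication with a
transposition, each counted twice: a part is cut in two or two parts are joined. -/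
def cutJoin : (Multiset ℕ → A) →ₗ[A] (Multiset ℕ → A) where
  toFun G := partSum fun k ν =>
    ∑ b ∈ Finset.Ico 1 k, G (b ::ₘ (k - b) ::ₘ ν) + partSum (fun s ν' => G ((k + s) ::ₘ ν')) ν
  map_add' G H := by
    ext μ
    simp only [Pi.add_apply, Finset.sum_add_distrib, partSum_add]
    ring
  map_smul' c G := by
    ext μ
    simp only [Pi.smul_apply, smul_eq_mul, ← Finset.mul_sum, partSum_const_mul, ← mul_add,
      RingHom.id_apply]

lemma cutJoin_apply (G : Multiset ℕ → A) (μ : Multiset ℕ) :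
    cutJoin G μ = partSum (fun k ν => ∑ b ∈ Finset.Ico 1 k, G (b ::ₘ (k - b) ::ₘ ν) +
      partSum (fun s ν' => G ((k + s) ::ₘ ν')) ν) μ := rfl

@[simp] lemma cutJoin_zero_right (G : Multiset ℕ → A) : cutJoin G 0 = 0 := by
  simp [cutJoin_apply]

lemma cutJoin_cons (G : Multiset ℕ → A) (t : ℕ) (μ : Multiset ℕ) :
    cutJoin G (t ::ₘ μ) = cutJoin (fun ν => G (t ::ₘ ν)) μ
      + t * ∑ b ∈ Finset.Ico 1 t, G (b ::ₘ (t - b) ::ₘ μ)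
      + 2 * t * partSum (fun s ν => G ((t + s) ::ₘ ν)) μ := by
  simp only [cutJoin_apply, partSum_cons, partSum_add, partSum_const_mul, Multiset.cons_swap t,
    add_comm t]
  ring

lemma cutJoin_const_mul (c : A) (G : Multiset ℕ → A) (μ : Multiset ℕ) :
    cutJoin (fun ν => c * G ν) μ = c * cutJoin G μ :=
  congrFun (map_smul cutJoin c G) μ

lemma map_cutJoin {B : Type*} [CommRing B] (φ : A →+ B) (G : Multiset ℕ → A) (μ : Multiset ℕ) :
    φ (cutJoin G μ) = cutJoin (fun ν => φ (G ν)) μ := by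
  simp only [cutJoin_apply, map_partSum, map_add, map_sum]

variable (A)

/-- The Jucys–Murphy operator: multiplication by the sum of the transpositions that move a marked
point. A cycle type with a marked point is recorded as `(i, μ)`, where `i + 1` is the length of
the marked cycle and `μ` lists the lengths of the others. -/
def jucysMurphy : Module.End A (ℕ → Multiset ℕ → A) where
  toFun F i μ := ∑ b ∈ Finset.range i, F b ((i - b) ::ₘ μ) + partSum (fun t => F (i + t)) μ
  map_add' F G := by
    ext i μ
    simp only [Pi.add_apply, Finset.sum_add_distrib]
    rw [show (fun t => F (i + t) + G (i + t)) = (fun t => F (i + t)) + fun t => G (i + t) from rfl,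
      map_add, Pi.add_apply]
    ring
  map_smul' c F := by
    ext i μ
    simp only [Pi.smul_apply, smul_eq_mul, ← Finset.mul_sum, RingHom.id_apply, mul_add]
    exact congrArg _ (partSum_const_mul c (fun t => F (i + t)) μ)

/-- The operator `cutJoin`, acting on cycle types with a marked point and keeping track of the
mark. -/
def markedCutJoin : Module.End A (ℕ → Multiset ℕ → A) where
  toFun F i μ := 2 * ∑ b ∈ Finset.range i, (b + 1 : A) * F b ((i - b) ::ₘ μ)
    + 2 * (i + 1) * partSum (fun t ν => F (i + t) ν) μ + cutJoin (F i) μ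
  map_add' F G := by
    ext i μ
    simp only [Pi.add_apply, mul_add, Finset.sum_add_distrib, partSum_add, map_add]
    ring
  map_smul' c F := by
    ext i μ
    simp only [Pi.smul_apply, smul_eq_mul, mul_left_comm _ c, ← Finset.mul_sum,
      partSum_const_mul, map_smul, RingHom.id_apply]
    ring

/-- Add an unmarked part `t` to the argument. -/
def addPart (t : ℕ) : Module.End A (ℕ → Multiset ℕ → A) where
  toFun F i μ := F i (t ::ₘ μ)
  map_add' _ _ := rfl
  map_smul' _ _ := rfl

/-- Lengthen the marked part of the argument by `t`. -/
def lengthenMark (t : ℕ) : Module.End A (ℕ → Multiset ℕ → A) where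
  toFun F i μ := F (i + t) μ
  map_add' _ _ := rfl
  map_smul' _ _ := rfl

variable {A}

/-- Multiply by a function of the total size of the argument. -/
def sizeMul (c : ℕ → A) : Module.End A (ℕ → Multiset ℕ → A) where
  toFun F i μ := c (i + 1 + μ.sum) * F i μ
  map_add' F G := by ext; simp [mul_add]
  map_smul' a F := by ext; simp [mul_left_comm]

lemma jucysMurphy_apply (F : ℕ → Multiset ℕ → A) (i : ℕ) (μ : Multiset ℕ) :
    jucysMurphy A F i μ =
      ∑ b ∈ Finset.range i, F b ((i - b) ::ₘ μ) + partSum (fun t ν => F (i + t) ν) μ := rfl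

lemma markedCutJoin_apply (F : ℕ → Multiset ℕ → A) (i : ℕ) (μ : Multiset ℕ) :
    markedCutJoin A F i μ = 2 * ∑ b ∈ Finset.range i, (b + 1 : A) * F b ((i - b) ::ₘ μ)
      + 2 * (i + 1) * partSum (fun t ν => F (i + t) ν) μ + cutJoin (F i) μ := rfl

@[simp] lemma addPart_apply (t : ℕ) (F : ℕ → Multiset ℕ → A) (i : ℕ) (μ : Multiset ℕ) :
    addPart A t F i μ = F i (t ::ₘ μ) := rfl

@[simp] lemma lengthenMark_apply (t : ℕ) (F : ℕ → Multiset ℕ → A) (i : ℕ) (μ : Multiset ℕ) :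
    lengthenMark A t F i μ = F (i + t) μ := rfl

@[simp] lemma sizeMul_apply (c : ℕ → A) (F : ℕ → Multiset ℕ → A) (i : ℕ) (μ : Multiset ℕ) :
    sizeMul c F i μ = c (i + 1 + μ.sum) * F i μ := rfl

lemma lie_apply_apply (X Y : Module.End A (ℕ → Multiset ℕ → A)) (F : ℕ → Multiset ℕ → A)
    (i : ℕ) (μ : Multiset ℕ) : ⁅X, Y⁆ F i μ = X (Y F) i μ - Y (X F) i μ := rfl

lemma nsmul_apply_apply (n : ℕ) (X : Module.End A (ℕ → Multiset ℕ → A)) (F : ℕ → Multiset ℕ → A)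
    (i : ℕ) (μ : Multiset ℕ) : (n • X) F i μ = n * X F i μ := by
  rw [← nsmul_eq_mul]
  rfl

lemma jucysMurphy_cons (F : ℕ → Multiset ℕ → A) (i t : ℕ) (μ : Multiset ℕ) :
    jucysMurphy A F i (t ::ₘ μ) = jucysMurphy A (addPart A t F) i μ + t * F (i + t) μ := by
  simp only [jucysMurphy_apply, partSum_cons, addPart_apply, Multiset.cons_swap t]
  ring

lemma jucysMurphy_add_replicate_one (F : ℕ → Multiset ℕ → A) (i s : ℕ) (ν : Multiset ℕ) :
    jucysMurphy A F i (ν + Multiset.replicate (s + 1) 1) =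
      jucysMurphy A (fun b κ => F b (κ + Multiset.replicate (s + 1) 1)) i ν
        + (s + 1) * F (i + 1) (ν + Multiset.replicate s 1) := by
  induction s generalizing F with
  | zero =>
    have h := jucysMurphy_cons F i 1 ν
    rw [show addPart A 1 F = fun b κ => F b (1 ::ₘ κ) from rfl] at h
    simpa [add_comm _ ({1} : Multiset ℕ)] using h
  | succ s ih =>
    rw [Multiset.replicate_succ, Multiset.add_cons, jucysMurphy_cons, ih]
    simp only [addPart_apply, ← Multiset.add_cons, ← Multiset.replicate_succ]
    push_cast
    ring

lemma lie_addPart_jucysMurphy (t : ℕ) :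
    ⁅addPart A t, jucysMurphy A⁆ = t • lengthenMark A t := by
  ext F i μ
  rw [lie_apply_apply, addPart_apply, jucysMurphy_cons]
  simp

lemma lie_addPart_lengthenMark (s t : ℕ) :
    ⁅addPart A s, lengthenMark A t⁆ = 0 := by
  ext F i μ
  simp [lie_apply_apply]

lemma lie_addPart_markedCutJoin_apply (t : ℕ) (F : ℕ → Multiset ℕ → A) (i : ℕ) (μ : Multiset ℕ) :
    ⁅addPart A t, markedCutJoin A⁆ F i μ = 2 * (i + 1) * t * F (i + t) μ
      + t * ∑ b ∈ Finset.Ico 1 t, F i (b ::ₘ (t - b) ::ₘ μ)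
      + 2 * t * partSum (fun s ν => F i ((t + s) ::ₘ ν)) μ := by
  have hcut : cutJoin (addPart A t F i) μ = cutJoin (fun ν => F i (t ::ₘ ν)) μ := rfl
  simp only [lie_apply_apply, addPart_apply, markedCutJoin_apply, partSum_cons, cutJoin_cons, hcut,
    Multiset.cons_swap t]
  ring

lemma lie_addPart_lie_addPart_markedCutJoin (s t : ℕ) :
    ⁅addPart A s, ⁅addPart A t, markedCutJoin A⁆⁆ = (2 * s * t) • addPart A (t + s) := by
  ext F i μ
  rw [lie_apply_apply, addPart_apply, lie_addPart_markedCutJoin_apply,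
    lie_addPart_markedCutJoin_apply]
  simp only [partSum_cons, addPart_apply, nsmul_apply_apply,
    Multiset.cons_swap s]
  push_cast
  ring

lemma lie_lengthenMark_lie_addPart_markedCutJoin (s t : ℕ) :
    ⁅lengthenMark A s, ⁅addPart A t, markedCutJoin A⁆⁆ = (2 * s * t) • lengthenMark A (s + t) := by
  ext F i μ
  rw [lie_apply_apply, lengthenMark_apply, lie_addPart_markedCutJoin_apply,
    lie_addPart_markedCutJoin_apply]
  simp only [lengthenMark_apply, nsmul_apply_apply,
    add_right_comm i t s, add_assoc]
  push_cast
  ring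

lemma eq_zero_of_lie_addPart_eq_zero {X : Module.End A (ℕ → Multiset ℕ → A)}
    (hX : ∀ t, ⁅addPart A t, X⁆ = 0) (h0 : ∀ F i, X F i 0 = 0) : X = 0 := by
  ext F i μ
  induction μ using Multiset.induction_on generalizing F with
  | empty => exact h0 F i
  | cons t μ ih =>
    have h := lie_apply_apply (addPart A t) X F i μ
    rw [hX, ih] at h
    simpa using h.symm

lemma sum_Ico_one_reflect (f : ℕ → A) (k : ℕ) :
    ∑ c ∈ Finset.Ico 1 k, f (k - c) = ∑ c ∈ Finset.Ico 1 k, f c := by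
  simpa using Finset.sum_Ico_reflect f 1 k.le_succ

lemma sum_range_eq_zero_add_sum_Ico (f : ℕ → A) (h0 : f 0 = 0) (t : ℕ) :
    ∑ c ∈ Finset.range t, f c = ∑ c ∈ Finset.Ico 1 t, f c := by
  rcases t with _ | t
  · rfl
  · rw [Finset.range_eq_Ico, Finset.sum_eq_sum_Ico_succ_bot t.succ_pos, h0, zero_add]

lemma two_mul_sum_Ico_mul {g : ℕ → A} {k : ℕ} (hg : ∀ c ∈ Finset.Ico 1 k, g (k - c) = g c) :
    2 * ∑ c ∈ Finset.Ico 1 k, (c : A) * g c = k * ∑ c ∈ Finset.Ico 1 k, g c := by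
  have hreflect : ∑ c ∈ Finset.Ico 1 k, (c : A) * g c
      = ∑ c ∈ Finset.Ico 1 k, ((k : A) - c) * g c := by
    rw [← sum_Ico_one_reflect]
    refine Finset.sum_congr rfl fun c hc => ?_
    rw [hg c hc, Nat.cast_sub (Finset.mem_Ico.mp hc).2.le]
  rw [two_mul]
  nth_rewrite 2 [hreflect]
  rw [← Finset.sum_add_distrib, Finset.mul_sum]
  exact Finset.sum_congr rfl fun c _ => by ring

lemma jucysMurphy_zero_right (F : ℕ → Multiset ℕ → A) (i : ℕ) :
    jucysMurphy A F i 0 = ∑ b ∈ Finset.range i, F b {i - b} := by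
  simp [jucysMurphy_apply]

lemma markedCutJoin_zero_right (F : ℕ → Multiset ℕ → A) (i : ℕ) :
    markedCutJoin A F i 0 = 2 * ∑ b ∈ Finset.range i, (b + 1 : A) * F b {i - b} := by
  simp [markedCutJoin_apply]

lemma jucysMurphy_singleton (F : ℕ → Multiset ℕ → A) (i t : ℕ) :
    jucysMurphy A F i {t} = ∑ b ∈ Finset.range i, F b {i - b, t} + t * F (i + t) 0 := by
  simp [jucysMurphy_apply, Multiset.insert_eq_cons, partSum_singleton]

lemma markedCutJoin_singleton (F : ℕ → Multiset ℕ → A) (i t : ℕ) :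
    markedCutJoin A F i {t} = 2 * ∑ b ∈ Finset.range i, (b + 1 : A) * F b {i - b, t}
      + 2 * (i + 1) * (t * F (i + t) 0) + t * ∑ c ∈ Finset.Ico 1 t, F i {c, t - c} := by
  simp [markedCutJoin_apply, cutJoin_apply, Multiset.insert_eq_cons, partSum_singleton]

lemma jucysMurphy_pair (F : ℕ → Multiset ℕ → A) (i s t : ℕ) :
    jucysMurphy A F i {s, t} = ∑ b ∈ Finset.range i, F b {i - b, s, t}
      + (s * F (i + s) {t} + t * F (i + t) {s}) := by
  simp [jucysMurphy_apply, Multiset.insert_eq_cons, partSum_cons, partSum_singleton]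

lemma lie_addPart_markedCutJoin_singleton (t : ℕ) (F : ℕ → Multiset ℕ → A) (i s : ℕ) :
    ⁅addPart A t, markedCutJoin A⁆ F i {s} = 2 * (i + 1) * t * F (i + t) {s}
      + t * ∑ c ∈ Finset.Ico 1 t, F i {c, t - c, s} + 2 * t * (s * F i {t + s}) := by
  rw [lie_addPart_markedCutJoin_apply]
  simp [Multiset.insert_eq_cons, partSum_singleton]

lemma lie_addPart_markedCutJoin_zero (t : ℕ) (F : ℕ → Multiset ℕ → A) (i : ℕ) :
    ⁅addPart A t, markedCutJoin A⁆ F i 0 = 2 * (i + 1) * t * F (i + t) 0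
      + t * ∑ c ∈ Finset.Ico 1 t, F i {c, t - c} := by
  rw [lie_addPart_markedCutJoin_apply]
  simp [Multiset.insert_eq_cons]

lemma sum_jucysMurphy_cut (F : ℕ → Multiset ℕ → A) (i t : ℕ) :
    ∑ c ∈ Finset.Ico 1 t, jucysMurphy A F i {c, t - c} =
      ∑ b ∈ Finset.range i, ∑ c ∈ Finset.Ico 1 t, F b {c, t - c, i - b}
        + 2 * ∑ c ∈ Finset.range t, c * F (i + c) {t - c} := by
  have hreflect : ∑ c ∈ Finset.Ico 1 t, ((t - c : ℕ) : A) * F (i + (t - c)) {c}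
      = ∑ c ∈ Finset.Ico 1 t, (c : A) * F (i + c) {t - c} := by
    rw [← sum_Ico_one_reflect fun c => (c : A) * F (i + c) {t - c}]
    refine Finset.sum_congr rfl fun c hc => ?_
    rw [Nat.sub_sub_self (Finset.mem_Ico.mp hc).2.le]
  have hrot (b c : ℕ) : ({i - b, c, t - c} : Multiset ℕ) = {c, t - c, i - b} := by
    simp only [Multiset.insert_eq_cons, ← Multiset.singleton_add]
    abel
  rw [sum_range_eq_zero_add_sum_Ico (fun c => (c : A) * F (i + c) {t - c}) (by simp)]
  simp only [jucysMurphy_pair, Finset.sum_add_distrib, hreflect, hrot]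
  rw [Finset.sum_comm]
  ring

lemma lie_jucysMurphy_lie_addPart_markedCutJoin_zero (t : ℕ) (F : ℕ → Multiset ℕ → A) (i : ℕ) :
    (⁅jucysMurphy A, ⁅addPart A t, markedCutJoin A⁆⁆
      + t • ⁅lengthenMark A t, markedCutJoin A⁆) F i 0 = 0 := by
  have hsplit (f : ℕ → ℕ → A) : ∑ b ∈ Finset.range (i + t), f b (i + t - b)
      = ∑ b ∈ Finset.range i, f b (t + (i - b)) + ∑ c ∈ Finset.range t, f (i + c) (t - c) := by
    rw [Finset.sum_range_add]
    refine congrArg₂ _ (Finset.sum_congr rfl fun b hb => ?_) (Finset.sum_congr rfl fun c _ => ?_)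
    · rw [add_comm i t, Nat.add_sub_assoc (Finset.mem_range.mp hb).le]
    · rw [Nat.add_sub_add_left]
  have hcut : ∑ b ∈ Finset.range i, ((i - b : ℕ) : A) * F b {t + (i - b)}
      = ∑ b ∈ Finset.range i, ((i - b : A) * F b {t + (i - b)}) :=
    Finset.sum_congr rfl fun b hb => by rw [Nat.cast_sub (Finset.mem_range.mp hb).le]
  simp only [LinearMap.add_apply, Pi.add_apply, nsmul_apply_apply,
    lie_apply_apply (jucysMurphy A), lie_apply_apply (lengthenMark A t), lengthenMark_apply,
    lie_addPart_markedCutJoin_zero, jucysMurphy_zero_right, markedCutJoin_zero_right,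
    lie_addPart_markedCutJoin_singleton, sum_jucysMurphy_cut, hsplit fun b k => F b {k},
    hsplit fun b k => (b + 1 : A) * F b {k}]
  simp only [Finset.sum_add_distrib, mul_assoc, ← Finset.mul_sum, hcut, sub_mul, add_mul,
    Finset.sum_sub_distrib, Nat.cast_add, one_mul, add_comm _ t, mul_left_comm _ (t : A)]
  ring

lemma lie_jucysMurphy_lie_addPart_markedCutJoin (t : ℕ) :
    ⁅jucysMurphy A, ⁅addPart A t, markedCutJoin A⁆⁆
      = -(t • ⁅lengthenMark A t, markedCutJoin A⁆) := by
  refine eq_neg_of_add_eq_zero_left (eq_zero_of_lie_addPart_eq_zero (fun s => ?_)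
    fun F i => lie_jucysMurphy_lie_addPart_markedCutJoin_zero t F i)
  rw [lie_add, lie_nsmul, leibniz_lie, leibniz_lie (addPart A s) (lengthenMark A t),
    lie_addPart_jucysMurphy, lie_addPart_lie_addPart_markedCutJoin, lie_addPart_lengthenMark,
    nsmul_lie, lie_lengthenMark_lie_addPart_markedCutJoin, lie_nsmul, ← lie_skew (jucysMurphy A),
    lie_addPart_jucysMurphy, zero_lie, zero_add, lie_lengthenMark_lie_addPart_markedCutJoin,
    add_comm t s]
  module

lemma sum_range_sum_Ico_sub (g : ℕ → ℕ → A) (i : ℕ) :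
    ∑ e ∈ Finset.range i, ∑ b ∈ Finset.range e, g b (e - b) =
      ∑ b ∈ Finset.range i, ∑ c ∈ Finset.Ico 1 (i - b), g b c := by
  rw [Finset.sum_sigma', Finset.sum_sigma']
  refine Finset.sum_nbij' (fun x => ⟨x.2, x.1 - x.2⟩) (fun x => ⟨x.1 + x.2, x.1⟩) ?_ ?_ ?_ ?_ ?_ <;>
    simp only [Finset.mem_sigma, Finset.mem_Ico, Finset.mem_range] <;> rintro ⟨b, c⟩ hb
  · dsimp only at hb ⊢; omega
  · dsimp only at hb ⊢; omega
  · dsimp only at hb ⊢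
    congr 1; omega
  · dsimp only at hb ⊢
    congr 1; omega
  · trivial

lemma lie_jucysMurphy_markedCutJoin_zero (F : ℕ → Multiset ℕ → A) (i : ℕ) :
    ⁅jucysMurphy A, markedCutJoin A⁆ F i 0 = 0 := by
  have hJT : jucysMurphy A (markedCutJoin A F) i 0 =
      ∑ e ∈ Finset.range i, ∑ b ∈ Finset.range e, 2 * (b + 1 : A) * F b {e - b, i - e}
        + ∑ e ∈ Finset.range i, 2 * (e + 1 : A) * (i - e : ℕ) * F i 0
        + ∑ e ∈ Finset.range i, ((i - e : ℕ) : A) *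
            ∑ c ∈ Finset.Ico 1 (i - e), F e {c, i - e - c} := by
    rw [jucysMurphy_zero_right]
    simp only [← Finset.sum_add_distrib]
    refine Finset.sum_congr rfl fun e he => ?_
    simp only [markedCutJoin_singleton, Finset.mul_sum, mul_assoc,
      Nat.add_sub_cancel' (Finset.mem_range.mp he).le]
  have hTJ : markedCutJoin A (jucysMurphy A F) i 0 =
      ∑ e ∈ Finset.range i, ∑ b ∈ Finset.range e, 2 * (e + 1 : A) * F b {e - b, i - e}
        + ∑ e ∈ Finset.range i, 2 * (e + 1 : A) * (i - e : ℕ) * F i 0 := by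
    rw [markedCutJoin_zero_right]
    simp only [← Finset.sum_add_distrib, Finset.mul_sum]
    refine Finset.sum_congr rfl fun e he => ?_
    simp only [jucysMurphy_singleton, Nat.add_sub_cancel' (Finset.mem_range.mp he).le,
      ← Finset.mul_sum]
    ring
  have hsym : ∑ e ∈ Finset.range i, ((i - e : ℕ) : A) *
        ∑ c ∈ Finset.Ico 1 (i - e), F e {c, i - e - c}
      = ∑ e ∈ Finset.range i, ∑ b ∈ Finset.range e, 2 * ((e - b : ℕ) : A) * F b {e - b, i - e} := by
    have htri := sum_range_sum_Ico_sub (fun b c => 2 * (c : A) * F b {c, i - b - c}) i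
    calc _ = ∑ b ∈ Finset.range i, ∑ c ∈ Finset.Ico 1 (i - b), 2 * (c : A) * F b {c, i - b - c} :=
          Finset.sum_congr rfl fun b _ => by
            simp only [mul_assoc, ← Finset.mul_sum]
            refine (two_mul_sum_Ico_mul fun c hc => ?_).symm
            rw [Nat.sub_sub_self (Finset.mem_Ico.mp hc).2.le, Multiset.pair_comm]
      _ = _ := htri.symm.trans <| Finset.sum_congr rfl fun e _ =>
          Finset.sum_congr rfl fun b hb => by
            rw [Nat.sub_sub, Nat.add_sub_cancel' (Finset.mem_range.mp hb).le]
  rw [lie_apply_apply, hJT, hTJ, hsym, add_right_comm, ← Finset.sum_add_distrib,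
    add_sub_add_right_eq_sub, sub_eq_zero]
  refine Finset.sum_congr rfl fun e _ => ?_
  rw [← Finset.sum_add_distrib]
  refine Finset.sum_congr rfl fun b hb => ?_
  rw [Nat.cast_sub (Finset.mem_range.mp hb).le]
  ring

lemma lie_jucysMurphy_markedCutJoin : ⁅jucysMurphy A, markedCutJoin A⁆ = 0 := by
  refine eq_zero_of_lie_addPart_eq_zero (fun t => ?_) lie_jucysMurphy_markedCutJoin_zero
  rw [leibniz_lie, lie_addPart_jucysMurphy, lie_jucysMurphy_lie_addPart_markedCutJoin, nsmul_lie,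
    add_neg_cancel]

lemma commute_jucysMurphy_sizeMul (c : ℕ → A) : Commute (jucysMurphy A) (sizeMul c) := by
  ext F i μ
  have hcut (b : ℕ) (hb : b ∈ Finset.range i) :
      c (b + 1 + ((i - b) ::ₘ μ).sum) = c (i + 1 + μ.sum) := by
    rw [Multiset.sum_cons]
    congr 1
    have := Finset.mem_range.mp hb
    omega
  have hjoin := partSum_size_mul (fun m => c (i + 1 + m)) (fun t ν => F (i + t) ν) μ
  simp only [Module.End.mul_apply, jucysMurphy_apply, sizeMul_apply, mul_add, Finset.mul_sum]
  rw [← hjoin]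
  refine congrArg₂ _ (Finset.sum_congr rfl fun b hb => by rw [hcut b hb]) ?_
  simp only [add_assoc, add_left_comm 1]

lemma markedCutJoin_zero_mark (F : ℕ → Multiset ℕ → A) (μ : Multiset ℕ) :
    markedCutJoin A F 0 μ = 2 * jucysMurphy A F 0 μ + cutJoin (F 0) μ := by
  simp [markedCutJoin_apply, jucysMurphy_apply]

lemma markedCutJoin_cons_mark (G : Multiset ℕ → A) (i : ℕ) (μ : Multiset ℕ) :
    markedCutJoin A (fun j ν => G ((j + 1) ::ₘ ν)) i μ = cutJoin G ((i + 1) ::ₘ μ) := by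
  have hcut : 2 * ∑ b ∈ Finset.range i, (b + 1 : A) * G ((b + 1) ::ₘ (i - b) ::ₘ μ)
      = (i + 1 : ℕ) * ∑ b ∈ Finset.Ico 1 (i + 1), G (b ::ₘ (i + 1 - b) ::ₘ μ) := by
    rw [← two_mul_sum_Ico_mul fun c hc => ?_, Finset.sum_Ico_eq_sum_range]
    · simp [add_comm 1]
    · rw [Nat.sub_sub_self (Finset.mem_Ico.mp hc).2.le, Multiset.cons_swap]
  rw [markedCutJoin_apply, cutJoin_cons, hcut]
  simp only [add_right_comm i _ 1, Nat.cast_add, Nat.cast_one]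
  ring

end CutJoin

/-! ### Power sums and the alternant -/

section PowerSums

open MvPolynomial

variable {σ R : Type*} [CommRing R]

/-- The derivation `xᵢ ∂/∂xᵢ`. -/
noncomputable def eulerDerivation (i : σ) : Derivation R (MvPolynomial σ R) (MvPolynomial σ R) :=
  (X i : MvPolynomial σ R) • pderiv i

lemma coeff_eulerDerivation (i : σ) (f : MvPolynomial σ R) (m : σ →₀ ℕ) :
    coeff m (eulerDerivation i f) = m i * coeff m f := by
  classical
  induction f using MvPolynomial.induction_on' with
  | monomial u a =>
    rw [eulerDerivation, Derivation.smul_apply, smul_eq_mul, X_mul_pderiv_monomial, coeff_smul,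
      coeff_monomial]
    split_ifs with hu
    · subst hu; simp
    · simp
  | add p q hp hq => simp only [map_add, mul_add, coeff_add, hp, hq]

lemma eulerDerivation_X_pow_self (i : σ) (k : ℕ) :
    eulerDerivation i (X i ^ k : MvPolynomial σ R) = (k : MvPolynomial σ R) * X i ^ k := by
  rw [X_pow_eq_monomial, eulerDerivation, Derivation.smul_apply, smul_eq_mul,
    X_mul_pderiv_monomial, nsmul_eq_mul, Finsupp.single_eq_same]

lemma eulerDerivation_X_pow_of_ne {i j : σ} (h : j ≠ i) (k : ℕ) :
    eulerDerivation i (X j ^ k : MvPolynomial σ R) = 0 := by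
  simp [eulerDerivation, pderiv_X_of_ne h]

/-- The derivation `xᵢ ↦ xᵢ ^ (k + 1)`, that is `∑ xᵢ ^ (k + 1) ∂/∂xᵢ`. -/
noncomputable def powerDerivation (k : ℕ) :
    Derivation R (MvPolynomial σ R) (MvPolynomial σ R) :=
  mkDerivation R fun i => X i ^ (k + 1)

/-- The complete homogeneous polynomial of degree `k` in the two variables `x_a` and `x_b`. -/
noncomputable def hsymmPair (R : Type*) [CommRing R] (k : ℕ) (a b : σ) : MvPolynomial σ R :=
  ∑ t ∈ Finset.range (k + 1), X a ^ t * X b ^ (k - t)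

lemma hsymmPair_comm (k : ℕ) (a b : σ) : hsymmPair R k a b = hsymmPair R k b a := by
  simpa [hsymmPair] using geom_sum₂_comm (X a : MvPolynomial σ R) (X b) (k + 1)

lemma hsymmPair_self (k : ℕ) (a : σ) :
    hsymmPair R k a a = (k + 1 : MvPolynomial σ R) * X a ^ k := by
  simpa [hsymmPair] using geom_sum₂_self (X a : MvPolynomial σ R) (k + 1)

lemma powerDerivation_X_sub_X (k : ℕ) (a b : σ) :
    powerDerivation k (X a - X b : MvPolynomial σ R) = hsymmPair R k a b * (X a - X b) := by
  simpa [powerDerivation, hsymmPair] using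
    (geom_sum₂_mul (X a : MvPolynomial σ R) (X b) (k + 1)).symm

lemma powerDerivation_prod_X_sub_X {ι : Type*} (k : ℕ) (s : Finset ι) (u v : ι → σ) :
    powerDerivation k (∏ x ∈ s, (X (u x) - X (v x)) : MvPolynomial σ R) =
      (∑ x ∈ s, hsymmPair R k (u x) (v x)) * ∏ x ∈ s, (X (u x) - X (v x)) := by
  classical
  induction s using Finset.induction_on with
  | empty => simp
  | insert a s ha ih =>
    rw [Finset.prod_insert ha, Finset.sum_insert ha, Derivation.leibniz, ih,
      powerDerivation_X_sub_X, smul_eq_mul, smul_eq_mul]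
    ring

variable [Fintype σ]

lemma powerDerivation_apply (k : ℕ) (f : MvPolynomial σ R) :
    powerDerivation k f = ∑ i, X i ^ k * eulerDerivation i f := by
  induction f using MvPolynomial.induction_on with
  | C a => simp [powerDerivation]
  | add p q hp hq => simp only [map_add, hp, hq, mul_add, Finset.sum_add_distrib]
  | mul_X p j hp =>
    classical
    simp only [Derivation.leibniz, hp, smul_eq_mul, mul_add, Finset.sum_add_distrib,
      mul_left_comm _ p, mul_left_comm _ (X j), ← Finset.mul_sum]
    congr 2
    rw [Finset.sum_eq_single j (fun i _ hi => ?_) (by simp)]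
    · simp [powerDerivation, eulerDerivation, pow_succ]
    · simp [eulerDerivation, pderiv_X_of_ne hi.symm]

lemma eulerDerivation_psum (i : σ) (k : ℕ) :
    eulerDerivation i (psum σ R k) = (k : MvPolynomial σ R) * X i ^ k := by
  rw [psum, map_sum, Finset.sum_eq_single i (fun j _ hj => eulerDerivation_X_pow_of_ne hj k)
    (by simp), eulerDerivation_X_pow_self]

lemma powerDerivation_psum (j k : ℕ) :
    powerDerivation j (psum σ R k) = (k : MvPolynomial σ R) * psum σ R (j + k) := by
  simp only [powerDerivation_apply, eulerDerivation_psum]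
  simp only [psum, Finset.mul_sum]
  exact Finset.sum_congr rfl fun i _ => by ring

/-- The differential operator `∑ (xᵢ ∂/∂xᵢ)²`, of which every monomial is an eigenvector. -/
noncomputable def laplacian (f : MvPolynomial σ R) : MvPolynomial σ R :=
  ∑ i, eulerDerivation i (eulerDerivation i f)

lemma coeff_laplacian (f : MvPolynomial σ R) (m : σ →₀ ℕ) :
    coeff m (laplacian f) = (∑ i, (m i : R) ^ 2) * coeff m f := by
  simp only [laplacian, coeff_sum, coeff_eulerDerivation, Finset.sum_mul]
  exact Finset.sum_congr rfl fun i _ => by ring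

lemma laplacian_psum_mul (k : ℕ) (g : MvPolynomial σ R) :
    laplacian (psum σ R k * g) = psum σ R k * laplacian g
      + 2 * (k : MvPolynomial σ R) * powerDerivation k g
      + (k : MvPolynomial σ R) ^ 2 * psum σ R k * g := by
  have hEE (i : σ) : eulerDerivation i (eulerDerivation i (psum σ R k * g))
      = psum σ R k * eulerDerivation i (eulerDerivation i g)
        + 2 * (k : MvPolynomial σ R) * (X i ^ k * eulerDerivation i g)
        + (k : MvPolynomial σ R) ^ 2 * X i ^ k * g := by
    simp only [Derivation.leibniz, smul_eq_mul, map_add, eulerDerivation_psum,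
      eulerDerivation_X_pow_self, Derivation.map_natCast]
    ring
  simp only [laplacian, hEE, Finset.sum_add_distrib, ← Finset.mul_sum, ← Finset.sum_mul,
    powerDerivation_apply]
  rfl

variable (σ R) in
/-- The product `p_μ` of the power sums indexed by the parts of `μ`. -/
noncomputable def powerSumProd (μ : Multiset ℕ) : MvPolynomial σ R := (μ.map (psum σ R)).prod

@[simp] lemma powerSumProd_zero : powerSumProd σ R 0 = 1 := by simp [powerSumProd]

lemma powerSumProd_cons (k : ℕ) (μ : Multiset ℕ) :
    powerSumProd σ R (k ::ₘ μ) = psum σ R k * powerSumProd σ R μ := by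
  simp [powerSumProd]

lemma rename_powerSumProd (e : Equiv.Perm σ) (μ : Multiset ℕ) :
    rename e (powerSumProd σ R μ) = powerSumProd σ R μ := by
  simp [powerSumProd, map_multiset_prod, rename_psum]

lemma powerDerivation_powerSumProd (k : ℕ) (μ : Multiset ℕ) :
    powerDerivation k (powerSumProd σ R μ)
      = partSum (fun s ν => powerSumProd σ R ((k + s) ::ₘ ν)) μ := by
  induction μ using Multiset.induction_on with
  | empty => simp
  | cons t μ ih =>
    simp only [powerSumProd_cons, Derivation.leibniz, smul_eq_mul, powerDerivation_psum,
      partSum_cons, mul_left_comm _ (psum σ R t), partSum_const_mul, ih]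
    ring

lemma sum_sum_hsymmPair {k : ℕ} (hk : 1 ≤ k) :
    ∑ a : σ, ∑ b, hsymmPair R k a b = 2 * Fintype.card σ * psum σ R k
      + ∑ c ∈ Finset.Ico 1 k, psum σ R c * psum σ R (k - c) := by
  have hconv : ∑ a : σ, ∑ b, hsymmPair R k a b
      = ∑ t ∈ Finset.range (k + 1), psum σ R t * psum σ R (k - t) := by
    simp only [hsymmPair, psum, Finset.sum_mul_sum, Finset.sum_comm (t := Finset.range (k + 1))]
  rw [hconv, Finset.sum_range_succ, Finset.range_eq_Ico, Finset.sum_eq_sum_Ico_succ_bot hk,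
    Nat.sub_self, psum_zero, Nat.sub_zero]
  ring

lemma two_mul_sum_Ioi_hsymmPair {n k : ℕ} (hk : 1 ≤ k) :
    2 * ∑ i : Fin n, ∑ j ∈ Finset.Ioi i, hsymmPair R k j i
      = (2 * n - (k + 1)) * psum (Fin n) R k
        + ∑ c ∈ Finset.Ico 1 k, psum (Fin n) R c * psum (Fin n) R (k - c) := by
  have hoff := Finset.sum_sum_Ioi_add_eq_sum_sum_off_diag (hsymmPair (σ := Fin n) R k)
  have hdiag (i : Fin n) : ∑ j ∈ {i}ᶜ, hsymmPair R k j i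
      = ∑ j, hsymmPair R k i j - (k + 1 : MvPolynomial (Fin n) R) * X i ^ k := by
    rw [← hsymmPair_self, ← Finset.sum_add_sum_compl {i} fun j => hsymmPair R k i j,
      Finset.sum_singleton, add_sub_cancel_left]
    exact Finset.sum_congr rfl fun j _ => hsymmPair_comm k j i
  simp only [hdiag, Finset.sum_sub_distrib, sum_sum_hsymmPair hk, ← Finset.mul_sum,
    Fintype.card_fin] at hoff
  rw [Finset.mul_sum, sub_mul, sub_add_eq_add_sub]
  refine Eq.trans ?_ hoff
  refine Finset.sum_congr rfl fun i _ => ?_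
  rw [Finset.mul_sum]
  exact Finset.sum_congr rfl fun j _ => by rw [hsymmPair_comm k i j, two_mul]

variable (R) in
/-- The alternant `det (x_j ^ (n - 1 - i))`. -/
noncomputable def alternant (n : ℕ) : MvPolynomial (Fin n) R :=
  (Matrix.of fun i j : Fin n => (X j : MvPolynomial (Fin n) R) ^ (i.rev : ℕ)).det

lemma alternant_eq_sum_monomial (n : ℕ) :
    alternant R n = ∑ w : Equiv.Perm (Fin n), monomial
      (Finsupp.equivFunOnFinite.symm fun i => ((w i).rev : ℕ)) ((Equiv.Perm.sign w : ℤ) : R) := by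
  rw [alternant, Matrix.det_apply']
  refine Finset.sum_congr rfl fun w _ => ?_
  rw [monomial_eq, Finsupp.prod_fintype _ _ (by simp)]
  simp

lemma alternant_eq_sign_mul_prod (n : ℕ) :
    alternant R n = (Equiv.Perm.sign (Fin.revPerm (n := n)) : ℤ) *
      ∏ x ∈ Finset.univ.sigma fun i : Fin n => Finset.Ioi i, (X x.2 - X x.1) := by
  have hmatrix : (Matrix.of fun i j : Fin n => (X j : MvPolynomial (Fin n) R) ^ (i.rev : ℕ))
      = (Matrix.vandermonde fun j : Fin n => (X j : MvPolynomial (Fin n) R)).transpose.submatrix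
        Fin.revPerm id := rfl
  rw [alternant, hmatrix, Matrix.det_permute, Matrix.det_transpose, Matrix.det_vandermonde,
    Finset.prod_sigma]

lemma rename_alternant {n : ℕ} (e : Equiv.Perm (Fin n)) :
    rename e (alternant R n) = (Equiv.Perm.sign e : ℤ) * alternant R n := by
  rw [alternant, AlgHom.map_det, ← Matrix.det_permute']
  congr 1
  ext1 i j
  simp

lemma two_mul_powerDerivation_alternant {n k : ℕ} (hk : 1 ≤ k) :
    2 * powerDerivation k (alternant R n) = ((2 * n - (k + 1)) * psum (Fin n) R k
      + ∑ c ∈ Finset.Ico 1 k, psum (Fin n) R c * psum (Fin n) R (k - c)) * alternant R n := by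
  rw [← two_mul_sum_Ioi_hsymmPair hk, alternant_eq_sign_mul_prod, Derivation.leibniz,
    Derivation.map_intCast, powerDerivation_prod_X_sub_X, Finset.sum_sigma]
  simp only [smul_eq_mul]
  ring

lemma laplacian_alternant (n : ℕ) :
    laplacian (alternant R n) = C (∑ i : Fin n, (i : R) ^ 2) * alternant R n := by
  have hperm (w : Equiv.Perm (Fin n)) : ∑ i, (((w i).rev : ℕ) : R) ^ 2 = ∑ i : Fin n, (i : R) ^ 2 :=
    Equiv.sum_comp (w.trans Fin.revPerm) fun i : Fin n => (i : R) ^ 2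
  ext m
  rw [coeff_laplacian, coeff_C_mul]
  simp only [alternant_eq_sum_monomial, coeff_sum, coeff_monomial, Finset.mul_sum]
  refine Finset.sum_congr rfl fun w _ => ?_
  split_ifs with hw
  · subst hw
    exact congrArg (· * _) (hperm w)
  · simp

lemma laplacian_powerSumProd_mul_alternant (n : ℕ) (μ : Multiset ℕ) :
    laplacian (powerSumProd (Fin n) R μ * alternant R n)
      = cutJoin (powerSumProd (Fin n) R) μ * alternant R n
        + C ((2 * n - 1) * μ.sum + ∑ i : Fin n, (i : R) ^ 2)
          * (powerSumProd (Fin n) R μ * alternant R n) := by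
  induction μ using Multiset.induction_on with
  | empty => simp [laplacian_alternant]
  | cons t μ ih =>
    have halt : 2 * (t : MvPolynomial (Fin n) R) * powerDerivation t (alternant R n)
        = t * ((2 * n - (t + 1)) * psum (Fin n) R t
          + ∑ c ∈ Finset.Ico 1 t, psum (Fin n) R c * psum (Fin n) R (t - c)) * alternant R n := by
      rcases t.eq_zero_or_pos with rfl | ht
      · simp
      · rw [mul_comm 2, mul_assoc, two_mul_powerDerivation_alternant ht, mul_assoc]
    have hcut : cutJoin (fun ν => powerSumProd (Fin n) R (t ::ₘ ν)) μ
        = psum (Fin n) R t * cutJoin (powerSumProd (Fin n) R) μ := by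
      simp only [powerSumProd_cons, cutJoin_const_mul]
    have hcuts : ∑ c ∈ Finset.Ico 1 t, powerSumProd (Fin n) R (c ::ₘ (t - c) ::ₘ μ)
        = (∑ c ∈ Finset.Ico 1 t, psum (Fin n) R c * psum (Fin n) R (t - c))
          * powerSumProd (Fin n) R μ := by
      simp only [powerSumProd_cons, ← mul_assoc, Finset.sum_mul]
    rw [powerSumProd_cons, mul_assoc, laplacian_psum_mul, ih, Derivation.leibniz,
      powerDerivation_powerSumProd, cutJoin_cons, hcut, hcuts]
    simp only [smul_eq_mul, Multiset.sum_cons, Nat.cast_add, C_add, C_mul, C_sub, C_1, map_natCast,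
      map_ofNat]
    linear_combination powerSumProd (Fin n) R μ * halt

end PowerSums

/-! ### Frobenius characters -/

section Character

open MvPolynomial

variable {n : ℕ}

/-- The coefficient of `x ^ l` in `p_μ` times the alternant. If `l = λ + δ` for a partition `λ`,
this is the value at cycle type `μ` of the character of the symmetric group indexed by `λ`. -/
noncomputable def character (l : Fin n → ℕ) (μ : Multiset ℕ) : ℝ :=
  coeff (Finsupp.equivFunOnFinite.symm l) (powerSumProd (Fin n) ℝ μ * alternant ℝ n)

/-- The exponents `l` with `k` subtracted from the `i`-th one. On Young diagrams this removes a rim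
hook of length `k`, up to reordering. -/
def removeHook (l : Fin n → ℕ) (k : ℕ) (i : Fin n) : Fin n → ℕ := Function.update l i (l i - k)

lemma character_cons (l : Fin n → ℕ) (k : ℕ) (μ : Multiset ℕ) :
    character l (k ::ₘ μ) = ∑ i with k ≤ l i, character (removeHook l k i) μ := by
  rw [character, powerSumProd_cons, psum, mul_assoc, Finset.sum_mul, coeff_sum, Finset.sum_filter]
  refine Finset.sum_congr rfl fun i _ => ?_
  rw [X_pow_eq_monomial, coeff_monomial_mul']
  simp only [Finsupp.single_le_iff, Finsupp.equivFunOnFinite_symm_apply_apply, one_mul]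
  congr 2
  ext j
  obtain rfl | hj := eq_or_ne j i
  · simp [removeHook]
  · simp [removeHook, Function.update_of_ne hj, Finsupp.single_eq_of_ne hj]

lemma character_comp_perm (l : Fin n → ℕ) (e : Equiv.Perm (Fin n)) (μ : Multiset ℕ) :
    character (l ∘ e) μ = (Equiv.Perm.sign e : ℤ) * character l μ := by
  have hmap : (Finsupp.equivFunOnFinite.symm (l ∘ e)).mapDomain e
      = Finsupp.equivFunOnFinite.symm l := by
    ext j
    obtain ⟨i, rfl⟩ := e.surjective j
    simp [Finsupp.mapDomain_apply e.injective]
  rw [character, ← coeff_rename_mapDomain e e.injective, hmap, map_mul, rename_powerSumProd,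
    rename_alternant, mul_left_comm, ← map_intCast (C : ℝ →+* MvPolynomial (Fin n) ℝ), coeff_C_mul,
    character]

lemma abs_character_comp_perm (l : Fin n → ℕ) (e : Equiv.Perm (Fin n)) (μ : Multiset ℕ) :
    |character (l ∘ e) μ| = |character l μ| := by
  rw [character_comp_perm, abs_mul, ← Int.cast_abs, Int.isUnit_iff_abs_eq.mp (Units.isUnit _),
    Int.cast_one, one_mul]

lemma character_eq_zero_of_not_injective {l : Fin n → ℕ} (hl : ¬ Function.Injective l)
    (μ : Multiset ℕ) : character l μ = 0 := by
  obtain ⟨a, b, hab, hne⟩ : ∃ a b, l a = l b ∧ a ≠ b := by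
    simpa [Function.Injective] using hl
  have hswap := character_comp_perm l (Equiv.swap a b) μ
  have hcomp : l ∘ Equiv.swap a b = l := by
    ext i
    by_cases ha : i = a
    · simp [ha, hab]
    · by_cases hb : i = b
      · simp [hb, hab]
      · simp [Equiv.swap_apply_of_ne_of_ne ha hb]
  rw [hcomp, Equiv.Perm.sign_swap hne, Units.val_neg, Units.val_one, Int.cast_neg, Int.cast_one]
    at hswap
  linarith

lemma character_zero_nonneg {l : Fin n → ℕ} (hl : StrictAnti l) : 0 ≤ character l 0 := by
  rw [character, powerSumProd_zero, one_mul, alternant_eq_sum_monomial, coeff_sum]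
  refine Finset.sum_nonneg fun w _ => ?_
  rw [coeff_monomial]
  split_ifs with hw
  · have hlw : (fun i => ((w i).rev : ℕ)) = l := Finsupp.equivFunOnFinite.symm.injective hw
    have hmono : StrictMono w := fun i j hij => by
      have hlt : ((w j).rev : ℕ) < (w i).rev := by simpa only [← hlw] using hl hij
      exact Fin.rev_lt_rev.mp hlt
    have hone : w = 1 := Equiv.ext fun i => congrFun hmono.eq_id i
    simp [hone]
  · exact le_rfl

/-- The eigenvalue at `character l` of `cutJoin` in size `d`. -/
def eigenvalue (l : Fin n → ℕ) (d : ℕ) : ℝ :=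
  ∑ i, (l i : ℝ) ^ 2 - ((2 * n - 1) * d + ∑ i : Fin n, (i : ℝ) ^ 2)

lemma cutJoin_character (l : Fin n → ℕ) (μ : Multiset ℕ) :
    cutJoin (character l) μ = eigenvalue l μ.sum * character l μ := by
  have hcoeff := congrArg (coeff (Finsupp.equivFunOnFinite.symm l))
    (laplacian_powerSumProd_mul_alternant (R := ℝ) n μ)
  have hcut : coeff (Finsupp.equivFunOnFinite.symm l)
      (cutJoin (powerSumProd (Fin n) ℝ) μ * alternant ℝ n) = cutJoin (character l) μ :=
    map_cutJoin ((coeffAddMonoidHom (Finsupp.equivFunOnFinite.symm l)).comp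
      (AddMonoidHom.mulRight (alternant ℝ n))) (powerSumProd (Fin n) ℝ) μ
  rw [coeff_laplacian, coeff_add, hcut, coeff_C_mul] at hcoeff
  simp only [Finsupp.equivFunOnFinite_symm_apply_apply] at hcoeff
  rw [eigenvalue, character]
  linear_combination -hcoeff

lemma eigenvalue_sub_eigenvalue_removeHook {l : Fin n → ℕ} {i : Fin n} (hi : 1 ≤ l i) (d : ℕ) :
    eigenvalue l (d + 1) - eigenvalue (removeHook l 1 i) d = 2 * ((l i : ℝ) - n) := by
  have hsum : ∑ x, (removeHook l 1 i x : ℝ) ^ 2 = ∑ x, (l x : ℝ) ^ 2 - 2 * l i + 1 := by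
    rw [← Finset.add_sum_erase _ _ (Finset.mem_univ i),
      ← Finset.add_sum_erase _ (fun x => (l x : ℝ) ^ 2) (Finset.mem_univ i),
      Finset.sum_congr rfl fun x hx => by rw [removeHook, Function.update_of_ne
        (Finset.ne_of_mem_erase hx)], removeHook, Function.update_self, Nat.cast_sub hi]
    push_cast
    ring
  rw [eigenvalue, eigenvalue, hsum]
  push_cast
  ring

/-- The character as a function of a cycle type with a marked point, as in `jucysMurphy`. -/
noncomputable def markedCharacter (l : Fin n → ℕ) (i : ℕ) (μ : Multiset ℕ) : ℝ :=
  character l ((i + 1) ::ₘ μ)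

lemma markedCutJoin_jucysMurphy_pow_markedCharacter (l : Fin n → ℕ) (a : ℕ) :
    markedCutJoin ℝ ((jucysMurphy ℝ ^ a) (markedCharacter l))
      = sizeMul (eigenvalue l) ((jucysMurphy ℝ ^ a) (markedCharacter l)) := by
  have hmark : markedCutJoin ℝ (markedCharacter l)
      = sizeMul (eigenvalue l) (markedCharacter l) := by
    ext i μ
    rw [sizeMul_apply, ← Multiset.sum_cons]
    exact (markedCutJoin_cons_mark (character l) i μ).trans (cutJoin_character l _)
  have hcomm : Commute (markedCutJoin ℝ) (jucysMurphy ℝ ^ a) :=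
    (commute_iff_lie_eq.mpr lie_jucysMurphy_markedCutJoin).symm.pow_right a
  rw [← Module.End.mul_apply, hcomm.eq, Module.End.mul_apply, hmark, ← Module.End.mul_apply,
    ((commute_jucysMurphy_sizeMul (eigenvalue l)).pow_left a).eq, Module.End.mul_apply]

-- Jucys–Murphy: at a fixed point the operator acts through the contents `l i - n` of the boxes
-- that can be removed.
lemma jucysMurphy_pow_markedCharacter_zero (l : Fin n → ℕ) (a : ℕ) :
    (jucysMurphy ℝ ^ a) (markedCharacter l) 0
      = ∑ i with 1 ≤ l i, ((l i : ℝ) - n) ^ a • character (removeHook l 1 i) := by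
  induction a with
  | zero =>
    ext μ
    simpa [Finset.sum_apply, markedCharacter] using character_cons l 1 μ
  | succ a ih =>
    ext μ
    have htwo := markedCutJoin_zero_mark ((jucysMurphy ℝ ^ a) (markedCharacter l)) μ
    rw [markedCutJoin_jucysMurphy_pow_markedCharacter, sizeMul_apply, ih, zero_add, add_comm 1,
      ← Module.End.mul_apply, ← pow_succ', map_sum] at htwo
    simp only [Finset.sum_apply, map_smul, Pi.smul_apply, smul_eq_mul, cutJoin_character,
      Finset.mul_sum] at htwo ⊢
    rw [← sub_eq_iff_eq_add, ← Finset.sum_sub_distrib] at htwo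
    refine mul_left_cancel₀ two_ne_zero (htwo.symm.trans ?_)
    rw [Finset.mul_sum]
    refine Finset.sum_congr rfl fun i hi => ?_
    linear_combination ((l i : ℝ) - n) ^ a * character (removeHook l 1 i) μ *
      eigenvalue_sub_eigenvalue_removeHook (Finset.mem_filter.mp hi).2 μ.sum

end Character

/-! ### Shapes with few rows and columns -/

section Dimension

variable {n : ℕ}

@[simp] lemma removeHook_self (l : Fin n → ℕ) (k : ℕ) (i : Fin n) :
    removeHook l k i i = l i - k := Function.update_self ..

lemma removeHook_of_ne (l : Fin n → ℕ) (k : ℕ) {i j : Fin n} (h : j ≠ i) :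
    removeHook l k i j = l j := Function.update_of_ne h ..

lemma removeHook_le (l : Fin n → ℕ) (k : ℕ) (i : Fin n) : removeHook l k i ≤ l :=
  update_le_iff.mpr ⟨Nat.sub_le _ _, fun _ _ => le_rfl⟩

lemma sum_removeHook {l : Fin n → ℕ} {k : ℕ} {i : Fin n} (hk : k ≤ l i) :
    ∑ x, removeHook l k i x + k = ∑ x, l x := by
  rw [removeHook, Finset.sum_update_of_mem (Finset.mem_univ i), Finset.sdiff_singleton_eq_erase,
    add_right_comm, Nat.sub_add_cancel hk, Finset.add_sum_erase _ _ (Finset.mem_univ i)]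

lemma strictAnti_removeHook_one {l : Fin n → ℕ} {i : Fin n} (hl : StrictAnti l)
    (hinj : Function.Injective (removeHook l 1 i)) : StrictAnti (removeHook l 1 i) := by
  intro a b hab
  have hlt := hl hab
  have hne := hinj.ne hab.ne
  obtain rfl | ha := eq_or_ne a i
  · rw [removeHook_self, removeHook_of_ne _ _ hab.ne'] at hne ⊢
    omega
  · rw [removeHook_of_ne l 1 ha]
    exact (removeHook_le l 1 i b).trans_lt hlt

/-- The value of `character l` at the identity of the symmetric group on `d` letters. -/
noncomputable def dim (l : Fin n → ℕ) (d : ℕ) : ℝ := character l (Multiset.replicate d 1)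

lemma dim_succ (l : Fin n → ℕ) (d : ℕ) :
    dim l (d + 1) = ∑ i with 1 ≤ l i, dim (removeHook l 1 i) d := by
  rw [dim, Multiset.replicate_succ, character_cons]
  rfl

lemma dim_nonneg {l : Fin n → ℕ} (hl : StrictAnti l) (d : ℕ) : 0 ≤ dim l d := by
  induction d generalizing l with
  | zero => exact character_zero_nonneg hl
  | succ d ih =>
    rw [dim_succ]
    refine Finset.sum_nonneg fun i _ => ?_
    by_cases hinj : Function.Injective (removeHook l 1 i)
    · exact ih (strictAnti_removeHook_one hl hinj)
    · exact (character_eq_zero_of_not_injective hinj _).ge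

lemma dim_removeHook_one_le {l : Fin n → ℕ} {i : Fin n} (hl : StrictAnti l) (hi : 1 ≤ l i)
    (d : ℕ) : dim (removeHook l 1 i) d ≤ dim l (d + 1) := by
  rw [dim_succ]
  refine Finset.single_le_sum (f := fun i => dim (removeHook l 1 i) d) (fun j _ => ?_)
    (Finset.mem_filter.mpr ⟨Finset.mem_univ i, hi⟩)
  by_cases hinj : Function.Injective (removeHook l 1 j)
  · exact dim_nonneg (strictAnti_removeHook_one hl hinj) d
  · exact (character_eq_zero_of_not_injective hinj _).ge

lemma exists_strictAnti_removeHook_one {m l : Fin n → ℕ} (hm : StrictAnti m) (hl : StrictAnti l)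
    (hml : m < l) :
    ∃ i, 1 ≤ l i ∧ m ≤ removeHook l 1 i ∧ StrictAnti (removeHook l 1 i) := by
  obtain ⟨hle, j, hj⟩ := Pi.lt_def.mp hml
  obtain ⟨i, hi, hmax⟩ := Finset.exists_max_image {i | m i < l i} id
    ⟨j, Finset.mem_filter.mpr ⟨Finset.mem_univ j, hj⟩⟩
  replace hi : m i < l i := (Finset.mem_filter.mp hi).2
  have hright (x : Fin n) (hx : i < x) : l x + 1 < l i := by
    have hlx : l x ≤ m x := not_lt.mp fun h =>
      hx.not_ge (hmax x (Finset.mem_filter.mpr ⟨Finset.mem_univ x, h⟩))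
    have := hm hx
    omega
  refine ⟨i, by omega, le_update_iff.mpr ⟨by omega, fun x _ => hle x⟩, fun a b hab => ?_⟩
  obtain rfl | ha := eq_or_ne a i
  · rw [removeHook_self, removeHook_of_ne _ _ hab.ne']
    have := hright b hab
    omega
  · rw [removeHook_of_ne l 1 ha]
    exact (removeHook_le l 1 i b).trans_lt (hl hab)

lemma dim_le_dim_of_le {m l : Fin n → ℕ} (hm : StrictAnti m) (hl : StrictAnti l) (hml : m ≤ l)
    {k : ℕ} (hk : ∑ i, m i + k = ∑ i, l i) (d : ℕ) : dim m d ≤ dim l (d + k) := by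
  induction k generalizing l with
  | zero =>
    rw [funext fun i => (Finset.sum_eq_sum_iff_of_le fun i _ => hml i).mp hk i (Finset.mem_univ i),
      add_zero]
  | succ k ih =>
    have hlt : m < l := lt_of_le_of_ne hml fun h => by subst h; omega
    obtain ⟨i, hi, hle, hanti⟩ := exists_strictAnti_removeHook_one hm hl hlt
    have hsum := sum_removeHook hi
    exact (ih hanti hle (by omega)).trans (dim_removeHook_one_le hl hi _)

lemma exists_perm_strictAnti {α : Type*} [LinearOrder α] {f : Fin n → α}
    (hf : Function.Injective f) : ∃ e : Equiv.Perm (Fin n), StrictAnti (f ∘ e) := by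
  refine ⟨Fin.revPerm.trans (Tuple.sort f), fun a b hab => ?_⟩
  exact ((Tuple.monotone_sort f).strictMono_of_injective (hf.comp (Tuple.sort f).injective))
    (Fin.rev_lt_rev.mpr hab)

lemma comp_perm_le_of_le {α : Type*} [Preorder α] {f g : Fin n → α} (hfg : f ≤ g)
    (hg : Antitone g) (e : Equiv.Perm (Fin n)) (hf : Antitone (f ∘ e)) : f ∘ e ≤ g := by
  intro x
  obtain ⟨y, hyx, hxy⟩ : ∃ y ≤ x, x ≤ e y := by
    by_contra! h
    have hcard := Finset.card_le_card_of_injOn (s := Finset.Iic x) (t := Finset.Iio x) e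
      (fun y hy => Finset.mem_coe.mpr (Finset.mem_Iio.mpr (h y (Finset.mem_Iic.mp hy))))
      e.injective.injOn
    rw [Fin.card_Iic, Fin.card_Iio] at hcard
    omega
  exact (hf hyx).trans ((hfg (e y)).trans (hg hxy))

lemma abs_dim_le_abs_dim_of_le {m l : Fin n → ℕ} (hl : Function.Injective l) (hml : m ≤ l)
    {k : ℕ} (hk : ∑ i, m i + k = ∑ i, l i) (d : ℕ) : |dim m d| ≤ |dim l (d + k)| := by
  by_cases hm : Function.Injective m
  · obtain ⟨e, he⟩ := exists_perm_strictAnti hl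
    obtain ⟨f, hf⟩ := exists_perm_strictAnti (hm.comp e.injective)
    have hle : m ∘ e ∘ f ≤ l ∘ e :=
      comp_perm_le_of_le (fun i => hml (e i)) he.antitone f hf.antitone
    have hsum : ∑ i, (m ∘ e ∘ f) i + k = ∑ i, (l ∘ e) i :=
      ((congrArg (· + k) (Equiv.sum_comp (f.trans e) m)).trans hk).trans (Equiv.sum_comp e l).symm
    have hdim := dim_le_dim_of_le hf he hle hsum d
    rwa [← abs_of_nonneg (dim_nonneg hf d), ← abs_of_nonneg (dim_nonneg he _), dim, dim,
      abs_character_comp_perm, abs_character_comp_perm, abs_character_comp_perm] at hdim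
  · rw [dim, character_eq_zero_of_not_injective hm, abs_zero]
    exact abs_nonneg _

end Dimension

section Shapes

variable {n : ℕ} {c ρ : ℝ} {l : Fin n → ℕ}

/-- All naturals below `c` occur among the exponents `l`. For `l = λ + δ` and `c = n - r` this says
that `λ` has at most `r` rows. -/
def CoversBelow (c : ℝ) (l : Fin n → ℕ) : Prop := ∀ m : ℕ, (m : ℝ) < c → m ∈ Set.range l

lemma CoversBelow.le_of_injective_removeHook (hc : CoversBelow c l) {k : ℕ} (hk : 0 < k)
    {i : Fin n} (hki : k ≤ l i) (hinj : Function.Injective (removeHook l k i)) : c ≤ l i := by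
  by_contra! hlt
  obtain ⟨x, hx⟩ := hc (l i - k) ((Nat.cast_le.mpr (Nat.sub_le _ _)).trans_lt hlt)
  have hxi : x ≠ i := by
    rintro rfl
    omega
  exact hxi (hinj (by rw [removeHook_self, removeHook_of_ne _ _ hxi, hx]))

lemma CoversBelow.removeHook (hc : CoversBelow c l) {k : ℕ} (hk : 0 < k) {i : Fin n}
    (hki : k ≤ l i) (hinj : Function.Injective (removeHook l k i)) :
    CoversBelow c (removeHook l k i) := by
  intro m hm
  obtain ⟨x, rfl⟩ := hc m hm
  have hxi : x ≠ i := by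
    rintro rfl
    exact hm.not_ge (hc.le_of_injective_removeHook hk hki hinj)
  exact ⟨x, removeHook_of_ne _ _ hxi⟩

lemma CoversBelow.card_filter_le (hc : CoversBelow (n - ρ) l) :
    (({i | (n : ℝ) - ρ ≤ l i} : Finset (Fin n)).card : ℝ) ≤ ρ := by
  have hsub : Finset.range ⌈(n : ℝ) - ρ⌉₊
      ⊆ ({i | ¬ (n : ℝ) - ρ ≤ l i} : Finset (Fin n)).image l := by
    intro m hm
    have hm' := Nat.lt_ceil.mp (Finset.mem_range.mp hm)
    obtain ⟨x, rfl⟩ := hc m hm'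
    exact Finset.mem_image_of_mem l
      (Finset.mem_filter.mpr ⟨Finset.mem_univ x, not_le.mpr hm'⟩)
  have hcard := (Finset.card_le_card hsub).trans Finset.card_image_le
  rw [Finset.card_range] at hcard
  have hsplit := Finset.card_filter_add_card_filter_not (s := (Finset.univ : Finset (Fin n)))
    fun i => (n : ℝ) - ρ ≤ l i
  rw [Finset.card_univ, Fintype.card_fin] at hsplit
  have hceil := (Nat.le_ceil ((n : ℝ) - ρ)).trans (Nat.cast_le.mpr hcard)
  have hsplit' := congrArg (Nat.cast : ℕ → ℝ) hsplit
  rw [Nat.cast_add] at hsplit'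
  linarith

/-- The exponents `l = λ + δ` of a diagram `λ` with at most `ρ` rows and at most `ρ` columns. -/
structure IsBalanced (ρ : ℝ) (l : Fin n → ℕ) : Prop where
  strictAnti : StrictAnti l
  le_add (i : Fin n) : (l i : ℝ) ≤ n + ρ
  coversBelow : CoversBelow (n - ρ) l

lemma IsBalanced.abs_sub_le (hl : IsBalanced ρ l) {i : Fin n} (hi : 1 ≤ l i)
    (hinj : Function.Injective (SymmetricCharacter.removeHook l 1 i)) : |(l i : ℝ) - n| ≤ ρ := by
  have hlower := hl.coversBelow.le_of_injective_removeHook one_pos hi hinj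
  have hupper := hl.le_add i
  exact abs_le.mpr ⟨by linarith, by linarith⟩

lemma IsBalanced.removeHook_one (hl : IsBalanced ρ l) {i : Fin n} (hi : 1 ≤ l i)
    (hinj : Function.Injective (removeHook l 1 i)) : IsBalanced ρ (removeHook l 1 i) where
  strictAnti := strictAnti_removeHook_one hl.strictAnti hinj
  le_add j := (Nat.cast_le.mpr (removeHook_le l 1 i j)).trans (hl.le_add j)
  coversBelow := hl.coversBelow.removeHook one_pos hi hinj

lemma isBalanced_add_rev {lam : Fin n → ℕ} (hlam : Antitone lam)
    (hrow : (({i | lam i ≠ 0} : Finset (Fin n)).card : ℝ) ≤ ρ) (hcol : ∀ i, (lam i : ℝ) ≤ ρ) :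
    IsBalanced ρ fun i => lam i + i.rev where
  strictAnti i j hij := add_lt_add_of_le_of_lt (hlam hij.le) (Fin.rev_lt_rev.mpr hij)
  le_add i := by
    have hrev : ((i.rev : ℕ) : ℝ) ≤ n := Nat.cast_le.mpr i.rev.isLt.le
    push_cast
    linarith [hcol i]
  coversBelow m hm := by
    have hmn : m < n := by
      have : (0 : ℝ) ≤ ρ := (Nat.cast_nonneg _).trans hrow
      have hmn : (m : ℝ) < n := by linarith
      exact_mod_cast hmn
    suffices hzero : lam (Fin.rev ⟨m, hmn⟩) = 0 from
      ⟨Fin.rev ⟨m, hmn⟩, by simp only [hzero, Fin.rev_rev, zero_add]⟩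
    by_contra hne
    have hsub : Finset.Iic (Fin.rev ⟨m, hmn⟩) ⊆ ({i | lam i ≠ 0} : Finset (Fin n)) := fun x hx =>
      Finset.mem_filter.mpr ⟨Finset.mem_univ x,
        ((Nat.pos_of_ne_zero hne).trans_le (hlam (Finset.mem_Iic.mp hx))).ne'⟩
    have hcard : n ≤ ({i | lam i ≠ 0} : Finset (Fin n)).card + m := by
      have := Finset.card_le_card hsub
      rw [Fin.card_Iic, Fin.val_rev] at this
      dsimp only at this
      omega
    have hcard' : (n : ℝ) ≤ ({i | lam i ≠ 0} : Finset (Fin n)).card + m := by exact_mod_cast hcard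
    linarith

/-- The bound that comes from counting the terms of the Murnaghan–Nakayama rule. -/
lemma abs_character_le_pow_card_mul (hl : Function.Injective l) (hc : CoversBelow (n - ρ) l)
    {ν : Multiset ℕ} (hν : 0 ∉ ν) (s : ℕ) :
    |character l (ν + Multiset.replicate s 1)| ≤ ρ ^ ν.card * |dim l (ν.sum + s)| := by
  induction ν using Multiset.induction_on generalizing l with
  | empty => simp [dim]
  | cons k ν ih =>
    obtain ⟨hk, hν⟩ : 0 < k ∧ 0 ∉ ν := by
      simpa [Nat.pos_iff_ne_zero, eq_comm] using hν
    have hρ : 0 ≤ ρ := (Nat.cast_nonneg _).trans hc.card_filter_le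
    have hterm (i : Fin n) (hi : k ≤ l i) :
        |character (removeHook l k i) (ν + Multiset.replicate s 1)|
          ≤ if (n : ℝ) - ρ ≤ l i then ρ ^ ν.card * |dim l (ν.sum + s + k)| else 0 := by
      by_cases hinj : Function.Injective (removeHook l k i)
      · rw [if_pos (hc.le_of_injective_removeHook hk hi hinj)]
        refine (ih hinj (hc.removeHook hk hi hinj) hν).trans
          (mul_le_mul_of_nonneg_left ?_ (pow_nonneg hρ _))
        exact abs_dim_le_abs_dim_of_le hl (removeHook_le l k i) (sum_removeHook hi) _
      · rw [character_eq_zero_of_not_injective hinj, abs_zero]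
        positivity
    rw [Multiset.cons_add, character_cons, Multiset.card_cons, Multiset.sum_cons]
    calc _ ≤ ∑ i with k ≤ l i, |character (removeHook l k i) (ν + Multiset.replicate s 1)| :=
          Finset.abs_sum_le_sum_abs _ _
      _ ≤ ∑ i, if (n : ℝ) - ρ ≤ l i then ρ ^ ν.card * |dim l (ν.sum + s + k)| else 0 :=
          (Finset.sum_le_sum fun i hi => hterm i (Finset.mem_filter.mp hi).2).trans
            (Finset.sum_le_univ_sum_of_nonneg fun i => by positivity)
      _ = ({i | (n : ℝ) - ρ ≤ l i} : Finset (Fin n)).card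
            * (ρ ^ ν.card * |dim l (ν.sum + s + k)|) := by
          rw [← Finset.sum_filter, Finset.sum_const, nsmul_eq_mul]
      _ ≤ ρ * (ρ ^ ν.card * |dim l (ν.sum + s + k)|) := by
          gcongr
          exact hc.card_filter_le
      _ = _ := by rw [pow_succ', mul_assoc, add_right_comm, add_comm k, add_right_comm]

end Shapes

/-! ### Comparison with multiplicative weights -/

section Comparison

lemma partSum_le_partSum {F G : ℕ → Multiset ℕ → ℝ} {μ : Multiset ℕ}
    (h : ∀ t ∈ μ, F t (μ.erase t) ≤ G t (μ.erase t)) : partSum F μ ≤ partSum G μ := by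
  rw [partSum_apply, partSum_apply]
  exact Multiset.sum_map_le_sum_map _ _ fun t ht =>
    mul_le_mul_of_nonneg_left (h t ht) t.cast_nonneg

lemma abs_partSum_le (F : ℕ → Multiset ℕ → ℝ) (μ : Multiset ℕ) :
    |partSum F μ| ≤ partSum (fun t ν => |F t ν|) μ := by
  rw [partSum_apply, partSum_apply]
  refine Multiset.abs_sum_le_sum_abs.trans_eq ?_
  simp only [Multiset.map_map, Function.comp_def, abs_mul, Nat.abs_cast]

lemma abs_jucysMurphy_le {F G : ℕ → Multiset ℕ → ℝ} {i : ℕ} {μ : Multiset ℕ} (hμ : 0 ∉ μ)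
    (h : ∀ b κ, 0 ∉ κ → b + κ.sum = i + μ.sum → |F b κ| ≤ G b κ) :
    |jucysMurphy ℝ F i μ| ≤ jucysMurphy ℝ G i μ := by
  rw [jucysMurphy_apply, jucysMurphy_apply]
  refine (abs_add_le _ _).trans (add_le_add ((Finset.abs_sum_le_sum_abs _ _).trans
    (Finset.sum_le_sum fun b hb => ?_)) ((abs_partSum_le _ _).trans
    (partSum_le_partSum fun t ht => ?_)))
  · have hbi := Finset.mem_range.mp hb
    refine h _ _ ?_ (by rw [Multiset.sum_cons]; omega)
    rw [Multiset.mem_cons, not_or]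
    exact ⟨by omega, hμ⟩
  · exact h _ _ (fun h0 => hμ (Multiset.mem_of_mem_erase h0)) (by rw [add_assoc, add_sum_erase ht])

/-- The multiplicative function with values `β k` at the cycles of length `k`, on cycle types with a
marked point. -/
def markedWeight (β : ℕ → ℝ) (i : ℕ) (μ : Multiset ℕ) : ℝ := β (i + 1) * (μ.map β).prod

/-- The inequality on the weights `β` that propagates a multiplicative bound through the recursion
given by the Jucys–Murphy operator, in the presence of at least `q` fixed points, for permutations
whose support has at most `K` elements and shapes with contents in `[-ρ, ρ]`. -/
structure IsMajorant (ρ q : ℝ) (K : ℕ) (β : ℕ → ℝ) : Prop where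
  nonneg (k : ℕ) : 0 ≤ β k
  one_le : 1 ≤ β 1
  step (i : ℕ) (μ : Multiset ℕ) : 0 ∉ μ → i + 1 + μ.sum ≤ K →
    ρ * markedWeight β i μ + jucysMurphy ℝ (markedWeight β) i μ ≤ q * markedWeight β (i + 1) μ

/-- The character bound with weights `β`, restricted to symmetric groups on `d` letters. -/
def CharacterBound (n : ℕ) (ρ q : ℝ) (K : ℕ) (β : ℕ → ℝ) (d : ℕ) : Prop :=
  ∀ (l : Fin n → ℕ) (μ : Multiset ℕ) (s : ℕ), IsBalanced ρ l → 0 ∉ μ → μ.sum ≤ K → q ≤ s →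
    μ.sum + s = d → |character l (μ + Multiset.replicate s 1)| ≤ dim l d * (μ.map β).prod

variable {n : ℕ} {ρ q : ℝ} {K d : ℕ} {β : ℕ → ℝ} {l : Fin n → ℕ}

lemma CharacterBound.abs_jucysMurphy_pow_zero_le (hd : CharacterBound n ρ q K β d)
    (hl : IsBalanced ρ l) {μ : Multiset ℕ} {s : ℕ} (hμ : 0 ∉ μ) (hK : μ.sum ≤ K) (hq : q ≤ s)
    (hsize : μ.sum + s = d) (a : ℕ) :
    |(jucysMurphy ℝ ^ a) (markedCharacter l) 0 (μ + Multiset.replicate s 1)|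
      ≤ dim l (d + 1) * ρ ^ a * (μ.map β).prod := by
  rw [jucysMurphy_pow_markedCharacter_zero, dim_succ, Finset.sum_apply, mul_assoc, Finset.sum_mul]
  refine (Finset.abs_sum_le_sum_abs _ _).trans (Finset.sum_le_sum fun i hi => ?_)
  replace hi := (Finset.mem_filter.mp hi).2
  rw [Pi.smul_apply, smul_eq_mul, abs_mul, abs_pow]
  by_cases hinj : Function.Injective (removeHook l 1 i)
  · have hcontent := hl.abs_sub_le hi hinj
    have hρ : 0 ≤ ρ := (abs_nonneg _).trans hcontent
    calc _ ≤ ρ ^ a * (dim (removeHook l 1 i) d * (μ.map β).prod) := by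
          gcongr
          exact hd _ μ s (hl.removeHook_one hi hinj) hμ hK hq hsize
      _ = _ := mul_left_comm _ _ _
  · rw [dim, character_eq_zero_of_not_injective hinj, character_eq_zero_of_not_injective hinj,
      abs_zero, mul_zero, zero_mul]

-- `jucysMurphy_add_replicate_one`, solved for its last term, shortens the marked cycle: all other
-- terms have one more fixed point.
lemma IsMajorant.abs_jucysMurphy_pow_le (hβ : IsMajorant ρ q K β) (hd : CharacterBound n ρ q K β d)
    (hρ : 0 ≤ ρ) (hl : IsBalanced ρ l) (a i : ℕ) {s : ℕ} {μ : Multiset ℕ} (hμ : 0 ∉ μ)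
    (hK : i + 1 + μ.sum ≤ K) (hq : q ≤ s) (hsize : i + μ.sum + s = d) :
    |(jucysMurphy ℝ ^ a) (markedCharacter l) i (μ + Multiset.replicate s 1)|
      ≤ dim l (d + 1) * ρ ^ a * markedWeight β i μ := by
  have hdim (a : ℕ) : 0 ≤ dim l (d + 1) * ρ ^ a :=
    mul_nonneg (dim_nonneg hl.strictAnti _) (pow_nonneg hρ a)
  have hprod (μ : Multiset ℕ) : 0 ≤ (μ.map β).prod :=
    Multiset.prod_map_nonneg fun k _ => hβ.nonneg k
  induction hκ : i + μ.sum using Nat.strong_induction_on generalizing a i s μ with | _ κ ih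
  obtain _ | i := i
  · refine (hd.abs_jucysMurphy_pow_zero_le hl hμ (by omega) hq (by omega) a).trans ?_
    exact mul_le_mul_of_nonneg_left (le_mul_of_one_le_left (hprod μ) hβ.one_le) (hdim a)
  have hq' : q ≤ (s + 1 : ℕ) := hq.trans (by exact_mod_cast s.le_succ)
  have hrec := jucysMurphy_add_replicate_one ((jucysMurphy ℝ ^ a) (markedCharacter l)) i s μ
  rw [← Module.End.mul_apply, ← pow_succ'] at hrec
  have hleft := ih (i + μ.sum) (by omega) (a + 1) i hμ (by omega) hq' (by omega) rfl
  have hright := abs_jucysMurphy_le (i := i)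
    (F := fun b ν => (jucysMurphy ℝ ^ a) (markedCharacter l) b (ν + Multiset.replicate (s + 1) 1))
    (G := (dim l (d + 1) * ρ ^ a) • markedWeight β) hμ
    fun b ν hν hb => ih (i + μ.sum) (by omega) a b hν (by omega) hq' (by omega) hb
  rw [map_smul] at hright
  have hs : (0 : ℝ) < s + 1 := s.cast_add_one_pos
  refine le_of_mul_le_mul_left ?_ hs
  rw [← abs_of_pos hs, ← abs_mul, abs_of_pos hs]
  calc _ ≤ dim l (d + 1) * ρ ^ (a + 1) * markedWeight β i μ
          + dim l (d + 1) * ρ ^ a * jucysMurphy ℝ (markedWeight β) i μ := by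
        rw [← sub_eq_iff_eq_add'.mpr hrec]
        exact (abs_sub _ _).trans (add_le_add hleft hright)
    _ = dim l (d + 1) * ρ ^ a
          * (ρ * markedWeight β i μ + jucysMurphy ℝ (markedWeight β) i μ) := by ring
    _ ≤ dim l (d + 1) * ρ ^ a * ((s + 1) * markedWeight β (i + 1) μ) := by
        refine mul_le_mul_of_nonneg_left ((hβ.step i μ hμ (by omega)).trans ?_) (hdim a)
        exact mul_le_mul_of_nonneg_right (by exact_mod_cast hq')
          (mul_nonneg (hβ.nonneg _) (hprod μ))
    _ = _ := by ring

theorem IsMajorant.characterBound (hβ : IsMajorant ρ q K β) (hρ : 0 ≤ ρ) (d : ℕ) :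
    CharacterBound n ρ q K β d := by
  induction d with
  | zero =>
    intro l μ s hl hμ _ _ hsize
    obtain rfl : μ = 0 := Multiset.eq_zero_of_forall_notMem fun k hk => hμ <| by
      have hsum := add_sum_erase hk
      rwa [show k = 0 by omega] at hk
    obtain rfl : s = 0 := by omega
    rw [Multiset.map_zero, Multiset.prod_zero, mul_one, zero_add]
    exact (abs_of_nonneg (dim_nonneg hl.strictAnti 0)).le
  | succ d ih =>
    intro l μ s hl hμ hK hq hsize
    induction μ using Multiset.induction_on with
    | empty =>
      obtain rfl : s = d + 1 := by simpa using hsize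
      rw [Multiset.map_zero, Multiset.prod_zero, mul_one, zero_add]
      exact (abs_of_nonneg (dim_nonneg hl.strictAnti _)).le
    | cons k μ _ =>
      rw [Multiset.mem_cons, not_or] at hμ
      rw [Multiset.sum_cons] at hK hsize
      obtain _ | i := k
      · exact absurd rfl hμ.1
      have hmark := hβ.abs_jucysMurphy_pow_le ih hρ hl 0 i hμ.2 (by omega) hq (by omega)
      rw [pow_zero, pow_zero, mul_one, Module.End.one_apply, markedWeight, ← Multiset.prod_cons,
        ← Multiset.map_cons] at hmark
      rwa [Multiset.cons_add]

end Comparison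

/-! ### The weights -/

section Weights

lemma partSum_const {A : Type*} [CommRing A] (c : A) (μ : Multiset ℕ) :
    partSum (fun _ _ => c) μ = μ.sum * c := by
  rw [partSum_apply, Multiset.sum_map_mul_right, Nat.cast_multiset_sum]

variable {δ θ ρ q : ℝ} {K : ℕ}

/-- The inverse square of `k`, raised by `δ`: the part of `cycleWeight` that is not geometric. -/
noncomputable def raisedInvSq (δ : ℝ) (k : ℕ) : ℝ := ((k : ℝ) ^ 2)⁻¹ + δ

lemma raisedInvSq_pos (hδ : 0 < δ) (k : ℕ) : 0 < raisedInvSq δ k := by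
  rw [raisedInvSq]
  positivity

lemma le_raisedInvSq (δ : ℝ) (k : ℕ) : δ ≤ raisedInvSq δ k :=
  le_add_of_nonneg_left (by positivity)

lemma raisedInvSq_anti (δ : ℝ) {a b : ℕ} (ha : 0 < a) (hab : a ≤ b) :
    raisedInvSq δ b ≤ raisedInvSq δ a := by
  rw [raisedInvSq, raisedInvSq]
  gcongr

lemma inv_sq_le_four_mul_inv_succ_sq (k : ℕ) :
    ((k : ℝ) ^ 2)⁻¹ ≤ 4 * (((k + 1 : ℕ) : ℝ) ^ 2)⁻¹ := by
  obtain rfl | hk := k.eq_zero_or_pos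
  · norm_num
  have hk' : (1 : ℝ) ≤ k := Nat.one_le_cast.mpr hk
  rw [← div_eq_mul_inv, inv_le_iff_one_le_mul₀ (by positivity), div_mul_eq_mul_div,
    one_le_div (by positivity)]
  push_cast
  nlinarith

lemma raisedInvSq_le_four_mul_succ (hδ : 0 ≤ δ) (k : ℕ) :
    raisedInvSq δ k ≤ 4 * raisedInvSq δ (k + 1) := by
  rw [raisedInvSq, raisedInvSq]
  linarith [inv_sq_le_four_mul_inv_succ_sq k]

lemma inv_sq_mul_inv_sq_le {b c : ℝ} (hb : 0 < b) (hc : 0 < c) :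
    (b ^ 2)⁻¹ * (c ^ 2)⁻¹ ≤ 2 * ((b + c) ^ 2)⁻¹ * ((b ^ 2)⁻¹ + (c ^ 2)⁻¹) := by
  have hsq : (b + c) ^ 2 ≤ 2 * (b ^ 2 + c ^ 2) := add_sq_le
  calc (b ^ 2)⁻¹ * (c ^ 2)⁻¹
      ≤ 2 * (b ^ 2 + c ^ 2) / (b + c) ^ 2 * ((b ^ 2)⁻¹ * (c ^ 2)⁻¹) :=
        le_mul_of_one_le_left (by positivity) ((one_le_div (by positivity)).mpr hsq)
    _ = _ := by
        field_simp
        ring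

lemma sum_range_inv_succ_sq_le_two (i : ℕ) :
    ∑ b ∈ Finset.range i, (((b + 1 : ℕ) : ℝ) ^ 2)⁻¹ ≤ 2 := by
  have h := sum_Ioo_inv_sq_le (α := ℝ) 0 (i + 1)
  rw [show Finset.Ioo 0 (i + 1) = Finset.Ico 1 (i + 1) from rfl, Finset.sum_Ico_eq_sum_range] at h
  simpa [add_comm 1] using h

lemma sum_raisedInvSq_mul_le (hδ : 0 ≤ δ) (i : ℕ) :
    ∑ b ∈ Finset.range i, raisedInvSq δ (b + 1) * raisedInvSq δ (i - b)
      ≤ 8 * (((i + 1 : ℕ) : ℝ) ^ 2)⁻¹ + 4 * δ + i * δ ^ 2 := by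
  set x : ℝ := (((i + 1 : ℕ) : ℝ) ^ 2)⁻¹ with hx
  have hterm (b : ℕ) (hb : b ∈ Finset.range i) :
      raisedInvSq δ (b + 1) * raisedInvSq δ (i - b) ≤
        (2 * x + δ) * ((((b + 1 : ℕ) : ℝ) ^ 2)⁻¹ + (((i - b : ℕ) : ℝ) ^ 2)⁻¹) + δ ^ 2 := by
    have hbi := Finset.mem_range.mp hb
    have hprod := inv_sq_mul_inv_sq_le (b := (b + 1 : ℕ)) (c := (i - b : ℕ))
      (Nat.cast_pos.mpr b.succ_pos) (Nat.cast_pos.mpr (Nat.sub_pos_of_lt hbi))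
    rw [← Nat.cast_add, show b + 1 + (i - b) = i + 1 by omega, ← hx] at hprod
    rw [raisedInvSq, raisedInvSq]
    linear_combination hprod
  have hreflect : ∑ b ∈ Finset.range i, (((i - b : ℕ) : ℝ) ^ 2)⁻¹
      = ∑ b ∈ Finset.range i, (((b + 1 : ℕ) : ℝ) ^ 2)⁻¹ := by
    rw [← Finset.sum_range_reflect fun b => (((b + 1 : ℕ) : ℝ) ^ 2)⁻¹]
    refine Finset.sum_congr rfl fun b hb => ?_
    rw [show i - 1 - b + 1 = i - b by have := Finset.mem_range.mp hb; omega]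
  refine (Finset.sum_le_sum hterm).trans ?_
  rw [Finset.sum_add_distrib, ← Finset.mul_sum, Finset.sum_add_distrib, hreflect, Finset.sum_const,
    Finset.card_range, nsmul_eq_mul]
  have hx0 : 0 ≤ 2 * x + δ := by positivity
  linear_combination 2 * mul_le_mul_of_nonneg_left (sum_range_inv_succ_sq_le_two i) hx0

/-- The weight of a cycle of length `k`. The factor `θ ^ (k - 1)` is the bound aimed at; the other
one is bounded, and makes up for the terms of the Jucys–Murphy recursion. -/
noncomputable def cycleWeight (δ θ : ℝ) (k : ℕ) : ℝ := 6 * raisedInvSq δ k * θ ^ (k - 1)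

lemma cycleWeight_nonneg (hδ : 0 < δ) (hθ : 0 ≤ θ) (k : ℕ) : 0 ≤ cycleWeight δ θ k := by
  have := raisedInvSq_pos hδ k
  rw [cycleWeight]
  positivity

lemma mul_cycleWeight_le (hδ : 0 < δ) (hθ : 0 ≤ θ) (hρ : 0 ≤ ρ) (hρq : 12 * ρ ≤ q * θ) (i : ℕ) :
    ρ * cycleWeight δ θ (i + 1) ≤ q / 3 * cycleWeight δ θ (i + 2) := by
  have hw := raisedInvSq_pos hδ (i + 2)
  calc ρ * cycleWeight δ θ (i + 1)
      = 6 * θ ^ i * (ρ * raisedInvSq δ (i + 1)) := by rw [cycleWeight, Nat.add_sub_cancel]; ring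
    _ ≤ 6 * θ ^ i * (ρ * (4 * raisedInvSq δ (i + 2))) := by
        gcongr
        exact raisedInvSq_le_four_mul_succ hδ.le _
    _ = 2 * θ ^ i * raisedInvSq δ (i + 2) * (12 * ρ) := by ring
    _ ≤ 2 * θ ^ i * raisedInvSq δ (i + 2) * (q * θ) := by gcongr
    _ = _ := by
        rw [cycleWeight, show i + 2 - 1 = i + 1 from rfl]
        ring

lemma nonneg_of_one_le_two_mul_mul_sq (h : 1 ≤ 2 * q * δ ^ 2) : 0 ≤ q := by
  have := pos_of_mul_pos_left (one_pos.trans_le h) (sq_nonneg δ)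
  linarith

lemma sum_raisedInvSq_mul_le_mul_sq (hδ : 0 < δ) (hδq : 1 ≤ 2 * q * δ ^ 2) (hθ : 34 * δ ≤ θ)
    {i : ℕ} (hi : (i : ℝ) ≤ 2 * q * δ) :
    18 * ∑ b ∈ Finset.range i, raisedInvSq δ (b + 1) * raisedInvSq δ (i - b)
      ≤ q * θ ^ 2 * raisedInvSq δ (i + 2) := by
  have hsum := sum_raisedInvSq_mul_le hδ.le i
  have hinv := inv_sq_le_four_mul_inv_succ_sq (i + 1)
  set x : ℝ := (((i + 1 : ℕ) : ℝ) ^ 2)⁻¹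
  have : 0 ≤ x := by positivity
  have hq : 0 ≤ q := nonneg_of_one_le_two_mul_mul_sq hδq
  calc _ ≤ 18 * (8 * x + 4 * δ + i * δ ^ 2) := by gcongr
    _ ≤ 18 * (8 * x + 4 * δ + 2 * q * δ * δ ^ 2) := by gcongr
    _ ≤ q * (34 * δ) ^ 2 * (x / 4 + δ) := by
        linear_combination (144 * x + 72 * δ) * hδq + (x * δ ^ 2 + 976 * δ ^ 3) * hq
    _ ≤ q * θ ^ 2 * (x / 4 + δ) := by gcongr
    _ ≤ _ := by
        rw [raisedInvSq]
        gcongr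
        linarith

lemma sum_cycleWeight_mul_le (hδ : 0 < δ) (hδq : 1 ≤ 2 * q * δ ^ 2) (hθ : 34 * δ ≤ θ) {i : ℕ}
    (hi : (i : ℝ) ≤ 2 * q * δ) :
    ∑ b ∈ Finset.range i, cycleWeight δ θ (b + 1) * cycleWeight δ θ (i - b)
      ≤ q / 3 * cycleWeight δ θ (i + 2) := by
  have hθ0 : 0 ≤ θ := by linarith
  obtain _ | i := i
  · have hq : 0 ≤ q := nonneg_of_one_le_two_mul_mul_sq hδq
    have hw := cycleWeight_nonneg hδ hθ0 2
    rw [Finset.sum_range_zero, zero_add]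
    positivity
  calc _ = 2 * θ ^ i * (18 * ∑ b ∈ Finset.range (i + 1),
            raisedInvSq δ (b + 1) * raisedInvSq δ (i + 1 - b)) := by
        rw [Finset.mul_sum, Finset.mul_sum]
        refine Finset.sum_congr rfl fun b hb => ?_
        rw [cycleWeight, cycleWeight, Nat.add_sub_cancel,
          ← pow_mul_pow_sub θ (Nat.le_of_lt_succ (Finset.mem_range.mp hb)), Nat.sub_right_comm,
          Nat.add_sub_cancel]
        ring
    _ ≤ 2 * θ ^ i * (q * θ ^ 2 * raisedInvSq δ (i + 1 + 2)) := by
        refine mul_le_mul_of_nonneg_left ?_ (by positivity)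
        exact sum_raisedInvSq_mul_le_mul_sq hδ hδq hθ hi
    _ = _ := by
        rw [cycleWeight, show i + 1 + 2 - 1 = i + 2 from rfl]
        ring

lemma cycleWeight_add_le (hδ : 0 < δ) (hθ : 0 ≤ θ) (i : ℕ) {t : ℕ} (ht : 0 < t) :
    cycleWeight δ θ (i + t + 1)
      ≤ raisedInvSq δ (i + 2) * θ ^ (i + 1) / δ * cycleWeight δ θ t := by
  have hw := raisedInvSq_pos hδ (i + 2)
  calc cycleWeight δ θ (i + t + 1)
      = 6 * θ ^ (i + t) * raisedInvSq δ (i + t + 1) := by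
        rw [cycleWeight, Nat.add_sub_cancel]
        ring
    _ ≤ 6 * θ ^ (i + t) * raisedInvSq δ (i + 2) := by
        gcongr
        exact raisedInvSq_anti δ (by omega) (by omega)
    _ = raisedInvSq δ (i + 2) * θ ^ (i + 1) / δ * (6 * δ * θ ^ (t - 1)) := by
        rw [show i + t = i + 1 + (t - 1) by omega, pow_add]
        field_simp
    _ ≤ _ := by
        rw [cycleWeight]
        gcongr
        exact le_raisedInvSq δ t

lemma partSum_markedWeight_cycleWeight_le (hδ : 0 < δ) (hθ : 0 ≤ θ) (i : ℕ) {μ : Multiset ℕ}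
    (hμ : 0 ∉ μ) (hsum : (μ.sum : ℝ) ≤ 2 * q * δ) :
    partSum (fun t ν => markedWeight (cycleWeight δ θ) (i + t) ν) μ
      ≤ q / 3 * markedWeight (cycleWeight δ θ) (i + 1) μ := by
  set P : ℝ := (μ.map (cycleWeight δ θ)).prod with hP
  have hnonneg := cycleWeight_nonneg hδ hθ
  have hP0 : 0 ≤ P := Multiset.prod_map_nonneg fun k _ => hnonneg k
  have hw := raisedInvSq_pos hδ (i + 2)
  calc _ ≤ partSum (fun _ _ => raisedInvSq δ (i + 2) * θ ^ (i + 1) / δ * P) μ := by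
        refine partSum_le_partSum fun t ht => ?_
        have ht0 : 0 < t := Nat.pos_of_ne_zero fun h => hμ (h ▸ ht)
        rw [hP, ← Multiset.cons_erase ht, Multiset.map_cons, Multiset.prod_cons, ← mul_assoc,
          Multiset.erase_cons_head]
        exact mul_le_mul_of_nonneg_right (cycleWeight_add_le hδ hθ i ht0)
          (Multiset.prod_map_nonneg fun k _ => hnonneg k)
    _ = μ.sum * (raisedInvSq δ (i + 2) * θ ^ (i + 1) / δ * P) := partSum_const _ μ
    _ ≤ 2 * q * δ * (raisedInvSq δ (i + 2) * θ ^ (i + 1) / δ * P) := by gcongr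
    _ = q / 3 * markedWeight (cycleWeight δ θ) (i + 1) μ := by
        rw [markedWeight, cycleWeight, show i + 1 + 1 - 1 = i + 1 from rfl, ← hP]
        field_simp
        ring

theorem isMajorant_cycleWeight (hδ : 0 < δ) (hδq : 1 ≤ 2 * q * δ ^ 2) (hK : (K : ℝ) ≤ 2 * q * δ)
    (hθ : 34 * δ ≤ θ) (hρ : 0 ≤ ρ) (hρq : 12 * ρ ≤ q * θ) :
    IsMajorant ρ q K (cycleWeight δ θ) := by
  have hθ0 : 0 ≤ θ := by linarith
  have hnonneg := cycleWeight_nonneg hδ hθ0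
  refine ⟨hnonneg, ?_, fun i μ hμ hi => ?_⟩
  · norm_num [cycleWeight, raisedInvSq]
    linarith
  have hP : 0 ≤ (μ.map (cycleWeight δ θ)).prod := Multiset.prod_map_nonneg fun k _ => hnonneg k
  have hi' : (i : ℝ) ≤ 2 * q * δ := (Nat.cast_le.mpr (by omega)).trans hK
  have hμ' : (μ.sum : ℝ) ≤ 2 * q * δ := (Nat.cast_le.mpr (by omega)).trans hK
  have hcontent := mul_le_mul_of_nonneg_right (mul_cycleWeight_le hδ hθ0 hρ hρq i) hP
  have hcut := mul_le_mul_of_nonneg_right (sum_cycleWeight_mul_le hδ hδq hθ hi') hP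
  have hjoin := partSum_markedWeight_cycleWeight_le hδ hθ0 i hμ hμ'
  have hsum : ∑ b ∈ Finset.range i, markedWeight (cycleWeight δ θ) b ((i - b) ::ₘ μ)
      = (∑ b ∈ Finset.range i, cycleWeight δ θ (b + 1) * cycleWeight δ θ (i - b))
        * (μ.map (cycleWeight δ θ)).prod := by
    simp only [markedWeight, Multiset.map_cons, Multiset.prod_cons, Finset.sum_mul, mul_assoc]
  rw [jucysMurphy_apply, hsum]
  simp only [markedWeight] at hjoin ⊢
  linarith

lemma cycleWeight_le (hδ1 : δ ≤ 1) (hθ : 0 ≤ θ) {k : ℕ} (hk : 2 ≤ k) :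
    cycleWeight δ θ k ≤ (8 * θ) ^ (k - 1) := by
  have hw : 6 * raisedInvSq δ k ≤ 8 := by
    have hanti := raisedInvSq_anti δ two_pos hk
    norm_num [raisedInvSq] at hanti ⊢
    linarith
  rw [cycleWeight, mul_pow]
  gcongr
  exact hw.trans (le_self_pow₀ (by norm_num) (by omega))

lemma prod_cycleWeight_le (hδ : 0 < δ) (hδ1 : δ ≤ 1) (hθ : 0 ≤ θ) {μ : Multiset ℕ}
    (hμ : ∀ k ∈ μ, 2 ≤ k) :
    (μ.map (cycleWeight δ θ)).prod ≤ (8 * θ) ^ (μ.sum - μ.card) := by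
  induction μ using Multiset.induction_on with
  | empty => simp
  | cons k μ ih =>
    rw [Multiset.forall_mem_cons] at hμ
    have hcard := Multiset.card_nsmul_le_sum hμ.2
    rw [smul_eq_mul] at hcard
    rw [Multiset.map_cons, Multiset.prod_cons, Multiset.sum_cons, Multiset.card_cons,
      show k + μ.sum - (μ.card + 1) = k - 1 + (μ.sum - μ.card) by omega, pow_add]
    exact mul_le_mul (cycleWeight_le hδ1 hθ hμ.1) (ih hμ.2)
      (Multiset.prod_map_nonneg fun k _ => cycleWeight_nonneg hδ hθ k) (by positivity)

end Weights

/-! ### The bound on characters -/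

section FrobeniusBound

open MvPolynomial

variable {n : ℕ}

lemma frobChar_eq_character (lam : Fin n → ℕ) (k : Multiset ℕ) :
    (frobChar n lam k : ℝ) = character (fun i => lam i + i.rev) k := by
  have hrev (i : Fin n) : n - 1 - (i : ℕ) = i.rev := by
    rw [Fin.val_rev]
    omega
  have hpsum : psum (Fin n) ℝ = fun m => ∑ i, X i ^ m := rfl
  rw [frobChar, ← eq_intCast (Int.castRingHom ℝ), ← coeff_map, character, alternant,
    Matrix.det_apply']
  simp [map_multiset_prod, powerSumProd, hpsum, hrev]

lemma le_max_one_sq_div_mul_sqrt {x y : ℝ} (hy : 0 < y) : x ≤ max 1 (x ^ 2 / y) * √y := by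
  have hsqrt := Real.sqrt_pos.mpr hy
  have hle : x / √y ≤ max 1 (x ^ 2 / y) := by
    rw [← Real.sq_sqrt hy.le, ← div_pow, Real.sq_sqrt hy.le]
    rcases le_total (x / √y) 1 with h | h
    · exact h.trans (le_max_left _ _)
    · exact (le_self_pow₀ h two_ne_zero).trans (le_max_right _ _)
  exact (div_le_iff₀ hsqrt).mp hle

lemma max_inv_sqrt_div_le {x y s : ℝ} (hy : 0 < y) (hs : s ≤ 2 * x) :
    max (√y)⁻¹ (s / y) ≤ 2 * (max 1 (x ^ 2 / y) / √y) := by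
  have hM : 1 ≤ max 1 (x ^ 2 / y) := le_max_left _ _
  refine max_le ?_ ?_
  · rw [← one_div, ← mul_div_assoc]
    gcongr
    linarith
  · calc s / y ≤ 2 * (max 1 (x ^ 2 / y) * √y) / y := by
          gcongr
          exact hs.trans (by linarith [le_max_one_sq_div_mul_sqrt (x := x) hy])
      _ = 2 * (max 1 (x ^ 2 / y) / √y) := by
          rw [mul_div_assoc, mul_div_assoc, Real.sqrt_div_self', mul_one_div]

lemma sqrt_le_of_le_four_mul {x y : ℝ} (hy : 0 < y) (hx : y ≤ 4 * x) :
    √y ≤ 16 * (max 1 (x ^ 2 / y) / √y) := by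
  rw [← mul_div_assoc, le_div_iff₀ (Real.sqrt_pos.mpr hy), Real.mul_self_sqrt hy.le]
  have hsq : y ≤ 16 * (x ^ 2 / y) := by
    rw [← mul_div_assoc, le_div_iff₀ hy]
    nlinarith
  linarith [le_max_right 1 (x ^ 2 / y)]

variable {C : ℝ} {l : Fin n → ℕ} {ν : Multiset ℕ}

lemma abs_character_le_of_two_mul_sum_le (hC : 0 ≤ C) (hn : 0 < n)
    (hl : IsBalanced (C * √n) l) (hν : ∀ k ∈ ν, 2 ≤ k) (hsum : 2 * ν.sum ≤ n) :
    |character l (ν + Multiset.replicate (n - ν.sum) 1)| ≤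
      dim l n * (8 * ((24 * C + 34) * max (√n)⁻¹ (ν.sum / n))) ^ (ν.sum - ν.card) := by
  have hn1 : (1 : ℝ) ≤ n := Nat.one_le_cast.mpr hn
  have hsqrt : 1 ≤ √(n : ℝ) := Real.one_le_sqrt.mpr hn1
  have hsum' : 2 * (ν.sum : ℝ) ≤ n := by exact_mod_cast hsum
  set δ : ℝ := max (√n)⁻¹ (ν.sum / n)
  have hδS : 1 ≤ √n * δ := by
    rw [← inv_le_iff_one_le_mul₀' (by positivity)]
    exact le_max_left _ _
  have hδK : (ν.sum : ℝ) ≤ n * δ := (div_le_iff₀' (by positivity)).mp (le_max_right _ _)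
  have hδ : 0 < δ := lt_max_of_lt_left (by positivity)
  have hδ1 : δ ≤ 1 :=
    max_le (inv_le_one_of_one_le₀ hsqrt) ((div_le_one (by positivity)).mpr (by linarith))
  have hsq : √n * √n = (n : ℝ) := Real.mul_self_sqrt (by positivity)
  have hq : (n : ℝ) / 2 ≤ ((n - ν.sum : ℕ) : ℝ) := by
    rw [Nat.cast_sub (by omega)]
    linarith
  set q : ℝ := ((n - ν.sum : ℕ) : ℝ)
  have hmajor : IsMajorant (C * √n) q ν.sum (cycleWeight δ ((24 * C + 34) * δ)) := by
    refine isMajorant_cycleWeight hδ ?_ ?_ (by nlinarith) (by positivity) ?_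
    · calc 1 ≤ (√n * δ) ^ 2 := one_le_pow₀ hδS
        _ = 2 * (n / 2) * δ ^ 2 := by rw [mul_pow, pow_two √_, hsq]; ring
        _ ≤ 2 * q * δ ^ 2 := by gcongr
    · calc (ν.sum : ℝ) ≤ 2 * (n / 2) * δ := by linarith
        _ ≤ 2 * q * δ := by gcongr
    · calc 12 * (C * √n) ≤ 12 * (C * √n) * (√n * δ) := le_mul_of_one_le_right (by positivity) hδS
        _ = n / 2 * (24 * C * δ) := by linear_combination 12 * C * δ * hsq
        _ ≤ q * ((24 * C + 34) * δ) := by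
            gcongr
            linarith
  have hzero : 0 ∉ ν := fun h => absurd (hν 0 h) (by norm_num)
  refine (hmajor.characterBound (by positivity) n l ν _ hl hzero le_rfl le_rfl (by omega)).trans ?_
  exact mul_le_mul_of_nonneg_left (prod_cycleWeight_le hδ hδ1 (by positivity) hν)
    (dim_nonneg hl.strictAnti n)

lemma abs_character_le_of_card_le (hC : 0 ≤ C) (hn : 0 < n)
    (hl : IsBalanced (C * √n) l) (hν : 0 ∉ ν) (hcard : ν.card ≤ ν.sum - ν.card) (hsum : ν.sum ≤ n) :
    |character l (ν + Multiset.replicate (n - ν.sum) 1)| ≤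
      dim l n * ((1 + C) * √n) ^ (ν.sum - ν.card) := by
  have hsqrt : 1 ≤ √(n : ℝ) := Real.one_le_sqrt.mpr (Nat.one_le_cast.mpr hn)
  have hMN := abs_character_le_pow_card_mul hl.strictAnti.injective hl.coversBelow hν (n - ν.sum)
  rw [Nat.add_sub_of_le hsum, abs_of_nonneg (dim_nonneg hl.strictAnti n), mul_comm] at hMN
  refine hMN.trans (mul_le_mul_of_nonneg_left ?_ (dim_nonneg hl.strictAnti n))
  calc (C * √n) ^ ν.card ≤ ((1 + C) * √n) ^ ν.card := by
        gcongr
        linarith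
    _ ≤ ((1 + C) * √n) ^ (ν.sum - ν.card) :=
        pow_le_pow_right₀ (one_le_mul_of_one_le_of_one_le (by linarith) hsqrt) hcard

theorem abs_character_le (hC : 0 ≤ C) (hn : 0 < n) (hl : IsBalanced (C * √n) l)
    (hν : ∀ k ∈ ν, 2 ≤ k) (hsum : ν.sum ≤ n) :
    |character l (ν + Multiset.replicate (n - ν.sum) 1)| ≤ dim l n *
      ((384 * C + 544) * max 1 (((ν.sum - ν.card : ℕ) : ℝ) ^ 2 / n) / √n) ^ (ν.sum - ν.card) := by
  have hcard := Multiset.card_nsmul_le_sum hν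
  rw [smul_eq_mul] at hcard
  have hn' : (0 : ℝ) < n := Nat.cast_pos.mpr hn
  have hdim := dim_nonneg hl.strictAnti n
  rw [mul_div_assoc]
  set M : ℝ := max 1 (((ν.sum - ν.card : ℕ) : ℝ) ^ 2 / n) / √n
  have : 0 ≤ M := by positivity
  by_cases hsmall : 2 * ν.sum ≤ n
  · refine (abs_character_le_of_two_mul_sum_le hC hn hl hν hsmall).trans ?_
    refine mul_le_mul_of_nonneg_left (pow_le_pow_left₀ (by positivity) ?_ _) hdim
    have hδ : max (√n)⁻¹ (ν.sum / n) ≤ 2 * M :=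
      max_inv_sqrt_div_le hn' (by exact_mod_cast (by omega))
    calc _ ≤ 8 * ((24 * C + 34) * (2 * M)) := by gcongr
      _ = _ := by ring
  · have hzero : 0 ∉ ν := fun h => absurd (hν 0 h) (by norm_num)
    refine (abs_character_le_of_card_le hC hn hl hzero (by omega) hsum).trans ?_
    refine mul_le_mul_of_nonneg_left (pow_le_pow_left₀ (by positivity) ?_ _) hdim
    have hsqrt : √n ≤ 16 * M := sqrt_le_of_le_four_mul hn' (by exact_mod_cast (by omega))
    calc _ ≤ (1 + C) * (16 * M) := by gcongr
      _ = (16 * C + 16) * M := by ring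
      _ ≤ _ := by gcongr <;> norm_num

end FrobeniusBound

end SymmetricCharacter

/-- the main result. -/
theorem main_result :
    ∀ C : ℝ, 0 < C → ∃ D : ℝ, 0 < D ∧
      ∀ (n : ℕ), 1 ≤ n →
        ∀ lam : Fin n → ℕ,
          (∀ i j : Fin n, i ≤ j → lam j ≤ lam i) →
          (∑ i, lam i = n) →
          (((Finset.univ.filter fun i : Fin n => lam i ≠ 0).card : ℝ) ≤ C * Real.sqrt n) →
          (∀ i : Fin n, (lam i : ℝ) ≤ C * Real.sqrt n) →
          ∀ π : Equiv.Perm (Fin n),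
            |normChar n lam π| ≤
              (D * max 1 ((permLength π : ℝ) ^ 2 / n) / Real.sqrt n) ^ permLength π := by
  intro C hC
  refine ⟨384 * C + 544, by positivity, fun n hn lam hlam _ hrow hcol π => ?_⟩
  have hsum : π.cycleType.sum ≤ n := by
    rw [Equiv.Perm.sum_cycleType]
    exact (Finset.card_le_univ _).trans_eq (Fintype.card_fin n)
  have hbound := SymmetricCharacter.abs_character_le hC.le hn
    (SymmetricCharacter.isBalanced_add_rev (fun i j => hlam i j) hrow hcol)
    (fun _ => Equiv.Perm.two_le_of_mem_cycleType) hsum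
  rw [SymmetricCharacter.dim, ← SymmetricCharacter.frobChar_eq_character,
    ← SymmetricCharacter.frobChar_eq_character, mul_comm] at hbound
  rw [normChar, abs_div]
  exact div_le_of_le_mul₀ (abs_nonneg _) (by positivity)
    (hbound.trans (mul_le_mul_of_nonneg_left (le_abs_self _) (by positivity)))
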